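/- arXiv:1411.1227 — 4 statements merged into one kernel-verified Lean document; each statement's English description precedes it below -/
import Mathlib

section
/- The saturated homogeneous ideal of the 7 points [1,0,0], [0,1,0], [0,0,1], [1,1,0], [1,0,1], [0,1,1], [1,1,1] in P^2 is generated by 3 cubic forms. -/
open MvPolynomial

/-- The seven points of `ℙ²`. -/
def sevenPoints : Fin 7 → (Fin 3 → ℚ) :=
  ![![1, 0, 0], ![0, 1, 0], ![0, 0, 1], ![1, 1, 0], ![1, 0, 1], ![0, 1, 1], ![1, 1, 1]]

/-- The normal form, modulo `xy(x-y)`, `xz(x-z)`, `yz(y-z)`, of a polynomial in three variables: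
a combination of the monomials `x^a`, `y^b`, `z^c`, `xy^b`, `xz^c`, `yz^c`, `xyz^c`. -/
theorem exists_normal_form (p : MvPolynomial (Fin 3) ℚ) :
    ∃ (a b c d e f g : Polynomial ℚ) (u v w : MvPolynomial (Fin 3) ℚ),
      p = Polynomial.aeval (X 0) a + X 1 * Polynomial.aeval (X 1) b
        + X 2 * Polynomial.aeval (X 2) c + X 0 * X 1 * Polynomial.aeval (X 1) d
        + X 0 * X 2 * Polynomial.aeval (X 2) e + X 1 * X 2 * Polynomial.aeval (X 2) f
        + X 0 * X 1 * X 2 * Polynomial.aeval (X 2) g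
        + u * (X 0 * X 1 * (X 0 - X 1)) + v * (X 0 * X 2 * (X 0 - X 2))
        + w * (X 1 * X 2 * (X 1 - X 2)) := by
  have sub_dvd (q : Polynomial ℚ) (i j : Fin 3) : (X i - X j : MvPolynomial (Fin 3) ℚ) ∣
      Polynomial.aeval (X i) q - Polynomial.aeval (X j) q := by
    have h := Polynomial.sub_dvd_eval_sub (X i : MvPolynomial (Fin 3) ℚ) (X j)
      (q.map (algebraMap ℚ (MvPolynomial (Fin 3) ℚ)))
    simpa only [Polynomial.eval_map_algebraMap] using h
  induction p using MvPolynomial.induction_on with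
  | C r =>
    refine ⟨Polynomial.C r, 0, 0, 0, 0, 0, 0, 0, 0, 0, ?_⟩
    simp [MvPolynomial.algebraMap_eq]
  | add p q hp hq =>
    obtain ⟨a, b, c, d, e, f, g, u, v, w, hp⟩ := hp
    obtain ⟨a', b', c', d', e', f', g', u', v', w', hq⟩ := hq
    refine ⟨a + a', b + b', c + c', d + d', e + e', f + f', g + g', u + u', v + v', w + w', ?_⟩
    simp only [map_add]
    linear_combination hp + hq
  | mul_X p i hp =>
    obtain ⟨a, b, c, d, e, f, g, u, v, w, hp⟩ := hp
    have ha : Polynomial.aeval (X 0 : MvPolynomial (Fin 3) ℚ) a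
        = Polynomial.aeval (X 0) a.divX * X 0 + C (a.coeff 0) := by
      conv_lhs => rw [← Polynomial.divX_mul_X_add a]
      simp [MvPolynomial.algebraMap_eq]
    fin_cases i
    · refine ⟨Polynomial.X * a, 0, 0, b + Polynomial.X * d, c + Polynomial.X * e, 0,
        f + Polynomial.X * g, X 0 * u + Polynomial.aeval (X 1) d,
        X 0 * v + Polynomial.aeval (X 2) e + X 1 * Polynomial.aeval (X 2) g, X 0 * w, ?_⟩
      simp only [map_add, map_mul, Polynomial.aeval_X, map_zero, Fin.zero_eta]
      linear_combination X 0 * hp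
    · obtain ⟨q, hq⟩ := sub_dvd a.divX 0 1
      refine ⟨0, Polynomial.C (a.coeff 0) + Polynomial.X * b, 0, a.divX + Polynomial.X * d, 0,
        c + Polynomial.X * f, e + Polynomial.X * g, X 1 * u + q, X 1 * v,
        X 1 * w + Polynomial.aeval (X 2) f + X 0 * Polynomial.aeval (X 2) g, ?_⟩
      simp only [map_add, map_mul, Polynomial.aeval_X, map_zero, Fin.mk_one, Polynomial.aeval_C,
        MvPolynomial.algebraMap_eq]
      linear_combination X 1 * hp + X 1 * ha + X 0 * X 1 * hq
    · obtain ⟨q, hq⟩ := sub_dvd a.divX 0 2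
      obtain ⟨r, hr⟩ := sub_dvd b 1 2
      obtain ⟨s, hs⟩ := sub_dvd d 1 2
      refine ⟨0, 0, Polynomial.C (a.coeff 0) + Polynomial.X * c, 0, a.divX + Polynomial.X * e,
        b + Polynomial.X * f, d + Polynomial.X * g, X 2 * u, X 2 * v + q,
        X 2 * w + r + X 0 * s, ?_⟩
      simp only [map_add, map_mul, Polynomial.aeval_X, map_zero, Fin.reduceFinMk,
        Polynomial.aeval_C, MvPolynomial.algebraMap_eq]
      linear_combination X 2 * hp + X 2 * ha + X 0 * X 2 * hq + X 1 * X 2 * hr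
        + X 0 * X 1 * X 2 * hs

/-- The saturated homogeneous ideal of the seven points
`[1,0,0], [0,1,0], [0,0,1], [1,1,0], [1,0,1], [0,1,1], [1,1,1]` of `ℙ²`, i.e. the
intersection of the (homogeneous) ideals of the individual points — equivalently of
the kernels of the parametrizations `k[x,y,z] → k[t]` of the lines of the affine cone —
is generated by `3` cubic forms. -/
theorem ideal_seven_points_three_cubics :
    ∃ g : Fin 3 → MvPolynomial (Fin 3) ℚ,
      (∀ j, (g j).IsHomogeneous 3) ∧
      (⨅ i : Fin 7, RingHom.ker ((aeval (fun j => Polynomial.C (sevenPoints i j) *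
          Polynomial.X) : MvPolynomial (Fin 3) ℚ →ₐ[ℚ] Polynomial ℚ) :
          MvPolynomial (Fin 3) ℚ →+* Polynomial ℚ)) = Ideal.span (Set.range g) := by
  refine ⟨![X 0 * X 1 * (X 0 - X 1), X 0 * X 2 * (X 0 - X 2), X 1 * X 2 * (X 1 - X 2)], ?_, ?_⟩
  · have hom (i j : Fin 3) :
        (X i * X j * (X i - X j) : MvPolynomial (Fin 3) ℚ).IsHomogeneous 3 :=
      ((isHomogeneous_X ℚ i).mul (isHomogeneous_X ℚ j)).mul
        ((isHomogeneous_X ℚ i).sub (isHomogeneous_X ℚ j))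
    intro j
    fin_cases j
    · exact hom 0 1
    · exact hom 0 2
    · exact hom 1 2
  · apply le_antisymm
    · intro p hp
      obtain ⟨a, b, c, d, e, f, g, u, v, w, rfl⟩ := exists_normal_form p
      have aeval_comp (i : Fin 7) (j : Fin 3) (q : Polynomial ℚ) :
          aeval (fun j => Polynomial.C (sevenPoints i j) * Polynomial.X)
            (Polynomial.aeval (X j : MvPolynomial (Fin 3) ℚ) q)
          = Polynomial.aeval (Polynomial.C (sevenPoints i j) * Polynomial.X) q := by
        rw [← Polynomial.aeval_algHom_apply, aeval_X]
      simp only [Ideal.mem_iInf, RingHom.mem_ker, RingHom.coe_coe, map_add, map_mul, map_sub,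
        aeval_comp, aeval_X] at hp
      have h0 := hp 0
      have h1 := hp 1
      have h2 := hp 2
      have h3 := hp 3
      have h4 := hp 4
      have h5 := hp 5
      have h6 := hp 6
      simp [sevenPoints] at h0
      subst h0
      simp [sevenPoints] at h1 h2
      subst h1 h2
      simp [sevenPoints] at h3 h4 h5
      subst h3 h4 h5
      simp [sevenPoints] at h6
      subst h6
      simp only [map_zero, mul_zero, zero_add]
      refine add_mem (add_mem ?_ ?_) ?_ <;> refine Ideal.mul_mem_left _ _ (Ideal.subset_span ?_)
      · exact ⟨0, rfl⟩
      · exact ⟨1, rfl⟩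
      · exact ⟨2, rfl⟩
    · rw [Ideal.span_le]
      rintro _ ⟨j, rfl⟩
      simp only [SetLike.mem_coe, Ideal.mem_iInf, RingHom.mem_ker, RingHom.coe_coe]
      intro i
      fin_cases j <;> fin_cases i <;> simp [sevenPoints]
end

section
/- The ideal generated by the 12 quadratic Cremona forms in equation (1) in ℚ[x_0,...,x_11] defines a projective scheme X ⊂ P^11 (the base locus of ω) of dimension 6 and degree 9, with Hilbert polynomial P(t) = 3·C(t+4,4) − 11·C(t+5,5) + 9·C(t+6,6). -/
open MvPolynomial

noncomputable section

/-- Coordinates `x₀, …, x₁₁` on `ℙ¹¹`. -/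
abbrev xP11 : Fin 12 → MvPolynomial (Fin 12) ℚ := X

/-- The 12 quadrics of equation (1), defining the Cremona map `ω : ℙ¹¹ ⇢ ℙ¹¹`. -/
def omegaP11 : Fin 12 → MvPolynomial (Fin 12) ℚ :=
  ![xP11 6 * xP11 10 - xP11 5 * xP11 11,
    xP11 1 * xP11 10 - xP11 4 * xP11 10 + xP11 3 * xP11 11,
    xP11 6 * xP11 8 - xP11 2 * xP11 11,
    xP11 5 * xP11 8 - xP11 2 * xP11 10,
    xP11 3 * xP11 8 - xP11 0 * xP11 10,
    xP11 1 * xP11 8 - xP11 4 * xP11 8 + xP11 0 * xP11 11,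
    xP11 6 * xP11 7 - xP11 1 * xP11 9 + xP11 4 * xP11 9 - xP11 4 * xP11 11,
    xP11 5 * xP11 7 + xP11 3 * xP11 9 - xP11 4 * xP11 10,
    xP11 2 * xP11 7 - xP11 4 * xP11 8 + xP11 0 * xP11 9,
    xP11 1 * xP11 5 - xP11 4 * xP11 5 + xP11 3 * xP11 6,
    xP11 2 * xP11 3 - xP11 0 * xP11 5,
    xP11 1 * xP11 2 - xP11 2 * xP11 4 + xP11 0 * xP11 6]

/-- The ideal generated by the 12 quadrics. -/
def idealOmegaP11 : Ideal (MvPolynomial (Fin 12) ℚ) := Ideal.span (Set.range omegaP11)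

/-- Its saturation with respect to the irrelevant maximal ideal. -/
def idealOmegaP11Sat : Ideal (MvPolynomial (Fin 12) ℚ) :=
  ⨆ t : ℕ, idealOmegaP11.colon
    ((Ideal.span (Set.range (X : Fin 12 → MvPolynomial (Fin 12) ℚ)) ^ t :
      Ideal (MvPolynomial (Fin 12) ℚ)) : Submodule _ _)

theorem ringKrullDim_eq_of_isIntegral_of_injective {R S : Type*} [CommRing R] [CommRing S]
    [Algebra R S] [Algebra.IsIntegral R S] (hinj : Function.Injective (algebraMap R S)) :
    ringKrullDim S = ringKrullDim R := by
  refine le_antisymm ?_ ?_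
  · exact Order.krullDim_le_of_strictMono (PrimeSpectrum.comap (algebraMap R S))
      fun I J h => Ideal.IsIntegral.comap_lt_comap h
  · refine iSup_le fun l => ?_
    obtain ⟨Q, -, hQ, hQ'⟩ := Ideal.exists_ideal_over_prime_of_isIntegral
      l.head.asIdeal (⊥ : Ideal S) (by
        rw [← RingHom.ker_eq_comap_bot, (RingHom.injective_iff_ker_eq_bot _).mp hinj]
        exact bot_le)
    have : Q.LiesOver l.head.asIdeal := ⟨hQ'.symm⟩
    obtain ⟨L, hL, -⟩ := Ideal.exists_ltSeries_of_hasGoingUp l Q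
    rw [← hL]
    exact Order.LTSeries.length_le_krullDim L

theorem ringKrullDim_eq_toNat_trdeg (k R : Type*) [Field k] [CommRing R] [IsDomain R]
    [Algebra k R] [Algebra.FiniteType k R] :
    ringKrullDim R = (Cardinal.toNat (Algebra.trdeg k R) : ℕ) := by
  obtain ⟨s, g, hg, hfin⟩ := exists_integral_inj_algHom_of_fg k R
  algebraize [g.toRingHom]
  have hinj : Function.Injective (algebraMap (MvPolynomial (Fin s) k) R) := hg
  have : FaithfulSMul (MvPolynomial (Fin s) k) R :=
    (faithfulSMul_iff_algebraMap_injective _ _).2 hinj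
  have : IsScalarTower k (MvPolynomial (Fin s) k) R := .of_algHom g
  have htr := lift_trdeg_add_eq k (MvPolynomial (Fin s) k) R
  rw [trdeg_eq_zero (R := MvPolynomial (Fin s) k) (A := R),
    MvPolynomial.trdeg_of_isDomain] at htr
  have hnat := congrArg Cardinal.toNat htr
  rw [ringKrullDim_eq_of_isIntegral_of_injective hinj,
    MvPolynomial.ringKrullDim_of_isNoetherianRing]
  simp at hnat
  simp [hnat]

theorem Multiset.prod_map_eq_of_map_fst_eq_of_map_snd_eq {α β S : Type*} [CommMonoid S]
    {f : α × β → S} (hf : ∀ a a' b b', f (a, b) * f (a', b') = f (a, b') * f (a', b))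
    {s t : Multiset (α × β)} (h₁ : s.map Prod.fst = t.map Prod.fst)
    (h₂ : s.map Prod.snd = t.map Prod.snd) : (s.map f).prod = (t.map f).prod := by
  classical
  induction s using Multiset.induction_on generalizing t with
  | empty =>
    rw [Multiset.map_zero, eq_comm, Multiset.map_eq_zero] at h₁
    rw [h₁]
  | cons x s ih =>
    obtain ⟨a, b⟩ := x
    have ha : a ∈ t.map Prod.fst := by rw [← h₁]; simp
    obtain ⟨⟨a₁, b'⟩, hmem, rfl⟩ := Multiset.mem_map.1 ha
    obtain ⟨t', rfl⟩ := Multiset.exists_cons_of_mem hmem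
    simp only [Multiset.map_cons, Multiset.cons_inj_right, Multiset.prod_cons] at h₁ h₂ ⊢
    by_cases hb : b = b'
    · subst hb
      rw [ih h₁ ((Multiset.cons_inj_right _).1 h₂)]
    · have hbm : b ∈ t'.map Prod.snd := by
        have : b ∈ b' ::ₘ t'.map Prod.snd := by rw [← h₂]; simp
        exact (Multiset.mem_cons.1 this).resolve_left hb
      obtain ⟨⟨a', b₁⟩, hmem', rfl⟩ := Multiset.mem_map.1 hbm
      obtain ⟨t'', rfl⟩ := Multiset.exists_cons_of_mem hmem'
      rw [ih (t := (a', b') ::ₘ t'')]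
      · simp only [Multiset.map_cons, Multiset.prod_cons, ← mul_assoc]
        rw [hf]
      · simpa using h₁
      · simp only [Multiset.map_cons] at h₂ ⊢
        rw [Multiset.cons_swap] at h₂
        exact (Multiset.cons_inj_right _).1 h₂

theorem Multiset.exists_map_fst_eq_map_snd_eq {α β : Type*} {A : Multiset α} {B : Multiset β}
    (h : A.card = B.card) :
    ∃ s : Multiset (α × β), s.map Prod.fst = A ∧ s.map Prod.snd = B := by
  induction A, B using Quotient.inductionOn₂ with
  | h A B =>
    refine ⟨(A.zip B : List (α × β)), ?_, ?_⟩
    · exact congrArg _ (List.map_fst_zip (l₁ := A) (l₂ := B) (by simpa using h.le))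
    · exact congrArg _ (List.map_snd_zip (l₁ := A) (l₂ := B) (by simpa using h.ge))

theorem MonomialOrder.linearIndependent_of_injective_degree {σ ι k : Type*} [Field k]
    (m : MonomialOrder σ) {f : ι → MvPolynomial σ k} (hf : ∀ i, f i ≠ 0)
    (hinj : Function.Injective fun i => m.degree (f i)) : LinearIndependent k f := by
  classical
  rw [linearIndependent_iff']
  by_contra! hcon
  obtain ⟨s, g, hsum, i, hi, hgi⟩ := hcon
  obtain ⟨j, hj, hmax⟩ := (s.filter (g · ≠ 0)).exists_max_image
    (fun i => m.toSyn (m.degree (f i))) ⟨i, by simp [hi, hgi]⟩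
  rw [Finset.mem_filter] at hj
  have hc := congrArg (coeff (m.degree (f j))) hsum
  rw [coeff_sum, Finset.sum_eq_single_of_mem j hj.1, coeff_smul, coeff_zero, smul_eq_mul] at hc
  · exact (mul_ne_zero hj.2 ((m.coeff_degree_ne_zero_iff).2 (hf j))) hc
  · intro b hb hbj
    rw [coeff_smul, smul_eq_mul]
    by_cases hgb : g b = 0
    · rw [hgb, zero_mul]
    · rw [m.coeff_eq_zero_of_lt, mul_zero]
      refine lt_of_le_of_ne (hmax b (by simp [hb, hgb])) fun h => hbj (hinj ?_)
      exact m.toSyn.injective h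

theorem MonomialOrder.degree_multiset_prod_map {σ ι k : Type*} [Field k]
    (m : MonomialOrder σ) {f : ι → MvPolynomial σ k} (hf : ∀ i, f i ≠ 0) (s : Multiset ι) :
    m.degree (s.map f).prod = (s.map fun i => m.degree (f i)).sum := by
  induction s using Multiset.induction_on with
  | empty => simp
  | cons a s ih =>
    rw [Multiset.map_cons, Multiset.prod_cons, Multiset.map_cons, Multiset.sum_cons, ← ih,
      m.degree_mul (hf a)]
    rw [Ne, Multiset.prod_eq_zero_iff, Multiset.mem_map]
    rintro ⟨i, -, hi⟩
    exact hf i hi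

/-- The generic `3 × 3` matrix of linear forms whose `2 × 2` minors are among the quadrics. -/
def segreEntry (p : Fin 3 × Fin 3) : MvPolynomial (Fin 12) ℚ :=
  !![X 8, X 10, X 11; X 2, X 5, X 6; X 0, X 3, X 4 - X 1] p.1 p.2

/-- The row vector of linear forms annihilating the matrix `segreEntry`. -/
def segreCovector : Fin 3 → MvPolynomial (Fin 12) ℚ := ![-X 4, X 7, X 9]

theorem omegaP11_mem (i : Fin 12) : omegaP11 i ∈ idealOmegaP11 :=
  Ideal.subset_span ⟨i, rfl⟩

theorem segreEntry_minor_mem_of_lt {a a' b b' : Fin 3} (ha : a < a') (hb : b < b') :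
    segreEntry (a, b) * segreEntry (a', b') - segreEntry (a, b') * segreEntry (a', b) ∈
      idealOmegaP11 := by
  have key : ∀ (i : Fin 12) (c : MvPolynomial (Fin 12) ℚ),
      omegaP11 i = c ∨ -omegaP11 i = c → c ∈ idealOmegaP11 := by
    rintro i c (h | h)
    · exact h ▸ omegaP11_mem i
    · exact h ▸ neg_mem (omegaP11_mem i)
  let e : Fin 3 → Fin 3 → Fin 3 → Fin 3 → Fin 12 :=
    fun a a' b b' =>
      if a = 0 then
        if a' = 1 then if b = 1 then 0 else if b' = 1 then 3 else 2
        else if b = 1 then 1 else if b' = 1 then 4 else 5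
      else if b = 1 then 9 else if b' = 1 then 10 else 11
  refine key (e a a' b b') _ ?_
  fin_cases a <;> fin_cases a' <;> first | exact absurd ha (by decide) | skip
  all_goals
    fin_cases b <;> fin_cases b' <;> first | exact absurd hb (by decide) | skip
  all_goals
    simp only [e, omegaP11, segreEntry, xP11]
    simp
    first
    | left; ring1
    | right; ring1

theorem segreEntry_minor_mem (a a' b b' : Fin 3) :
    segreEntry (a, b) * segreEntry (a', b') - segreEntry (a, b') * segreEntry (a', b) ∈
      idealOmegaP11 := by
  rcases lt_trichotomy a a' with ha | rfl | ha
  · rcases lt_trichotomy b b' with hb | rfl | hb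
    · exact segreEntry_minor_mem_of_lt ha hb
    · simp
    · rw [← neg_mem_iff, neg_sub]
      exact segreEntry_minor_mem_of_lt ha hb
  · rw [mul_comm, sub_self]
    exact zero_mem _
  · rcases lt_trichotomy b b' with hb | rfl | hb
    · rw [← neg_mem_iff, neg_sub, mul_comm, mul_comm (segreEntry (a, b))]
      exact segreEntry_minor_mem_of_lt ha hb
    · rw [mul_comm, sub_self]
      exact zero_mem _
    · rw [mul_comm, mul_comm (segreEntry (a, b'))]
      exact segreEntry_minor_mem_of_lt ha hb

theorem segreCovector_mul_segreEntry_mem (j : Fin 3) :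
    segreEntry (0, j) * segreCovector 0 + segreEntry (1, j) * segreCovector 1 +
      segreEntry (2, j) * segreCovector 2 ∈ idealOmegaP11 := by
  have h6 := omegaP11_mem 6
  have h7 := omegaP11_mem 7
  have h8 := omegaP11_mem 8
  simp only [omegaP11, xP11] at h6 h7 h8
  fin_cases j
  · convert h8 using 1
    simp [segreEntry, segreCovector]
    ring
  · convert h7 using 1
    simp [segreEntry, segreCovector]
    ring
  · convert h6 using 1
    simp [segreEntry, segreCovector]
    ring

/-- The row parameters `(1, u₁, u₂)` of the rational parametrization of the base locus. -/
def rowParam : Fin 3 → MvPolynomial (Fin 7) ℚ := ![1, X 0, X 1]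

/-- The column parameters of the rational parametrization of the base locus. -/
def colParam : Fin 3 → MvPolynomial (Fin 7) ℚ := ![X 2, X 3, X 4]

/-- A covector annihilating `rowParam`. -/
def covectorParam : Fin 3 → MvPolynomial (Fin 7) ℚ := ![-(X 0 * X 5 + X 1 * X 6), X 5, X 6]

/-- The rational parametrization of the affine cone over the base locus. -/
def coneParam : MvPolynomial (Fin 12) ℚ →ₐ[ℚ] MvPolynomial (Fin 7) ℚ :=
  aeval ![X 1 * X 2, X 0 * X 5 + X 1 * X 6 - X 1 * X 4, X 0 * X 2, X 1 * X 3,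
    X 0 * X 5 + X 1 * X 6, X 0 * X 3, X 0 * X 4, X 5, X 2, X 6, X 3, X 4]

theorem coneParam_segreEntry (p : Fin 3 × Fin 3) :
    coneParam (segreEntry p) = rowParam p.1 * colParam p.2 := by
  obtain ⟨i, j⟩ := p
  fin_cases i <;> fin_cases j <;> simp [coneParam, segreEntry, rowParam, colParam]

theorem coneParam_segreCovector (k : Fin 3) :
    coneParam (segreCovector k) = covectorParam k := by
  fin_cases k <;> simp [coneParam, segreCovector, covectorParam]

theorem idealOmegaP11_le_ker : idealOmegaP11 ≤ RingHom.ker coneParam := by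
  rw [idealOmegaP11, Ideal.span_le]
  rintro _ ⟨i, rfl⟩
  rw [SetLike.mem_coe, RingHom.mem_ker]
  fin_cases i <;> simp [omegaP11, xP11, coneParam] <;> ring

theorem idealOmegaP11_le_sat : idealOmegaP11 ≤ idealOmegaP11Sat :=
  Ideal.le_colon.trans (le_iSup (fun t : ℕ => idealOmegaP11.colon
    ((Ideal.span (Set.range (X : Fin 12 → MvPolynomial (Fin 12) ℚ)) ^ t :
      Ideal (MvPolynomial (Fin 12) ℚ)) : Submodule _ _)) 0)

theorem idealOmegaP11Sat_le_ker : idealOmegaP11Sat ≤ RingHom.ker coneParam := by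
  refine iSup_le fun t f hf => ?_
  have h := idealOmegaP11_le_ker (Submodule.mem_colon.1 hf (X 8 ^ t)
    (Ideal.pow_mem_pow (Ideal.subset_span (Set.mem_range_self 8)) t))
  rw [RingHom.mem_ker, smul_eq_mul, map_mul, map_pow] at h
  refine (mul_eq_zero.1 h).resolve_right (pow_ne_zero _ ?_)
  simp [coneParam]

theorem Multiset.sum_map_eq_sum_count_nsmul {ι M : Type*} [Fintype ι] [DecidableEq ι]
    [AddCommMonoid M] (g : ι → M) (s : Multiset ι) :
    (s.map g).sum = ∑ i, s.count i • g i := by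
  rw [Finset.sum_multiset_map_count]
  refine Finset.sum_subset (Finset.subset_univ _) fun i _ hi => ?_
  rw [Multiset.count_eq_zero.2 (by simpa using hi), zero_smul]

/-- The image of a product of linear forms with given row, column and covector content. -/
def contentImage (A B C : Multiset (Fin 3)) : MvPolynomial (Fin 7) ℚ :=
  (A.map rowParam).prod * (B.map colParam).prod * (C.map covectorParam).prod

theorem rowParam_ne_zero (i : Fin 3) : rowParam i ≠ 0 := by
  fin_cases i <;> simp [rowParam]

theorem colParam_ne_zero (i : Fin 3) : colParam i ≠ 0 := by
  fin_cases i <;> simp [colParam]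

theorem degree_rowParam (i : Fin 3) : MonomialOrder.lex.degree (rowParam i) =
    ![0, Finsupp.single 0 1, Finsupp.single 1 1] i := by
  fin_cases i <;> simp [rowParam, MonomialOrder.degree_X]

theorem degree_colParam (i : Fin 3) : MonomialOrder.lex.degree (colParam i) =
    ![Finsupp.single 2 1, Finsupp.single 3 1, Finsupp.single 4 1] i := by
  fin_cases i <;> simp [colParam, MonomialOrder.degree_X]

theorem degree_covectorParam (i : Fin 3) : MonomialOrder.lex.degree (covectorParam i) =
    ![Finsupp.single 0 1 + Finsupp.single 5 1, Finsupp.single 5 1, Finsupp.single 6 1] i := by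
  have h : ∀ a b : Fin 7, MonomialOrder.lex.degree (X a * X b : MvPolynomial (Fin 7) ℚ) =
      Finsupp.single a 1 + Finsupp.single b 1 := by
    intro a b
    rw [MonomialOrder.degree_mul (X_ne_zero a) (X_ne_zero b), MonomialOrder.degree_X,
      MonomialOrder.degree_X]
  fin_cases i
  · simp only [covectorParam, Fin.zero_eta, Matrix.cons_val_zero]
    rw [MonomialOrder.degree_neg, MonomialOrder.degree_add_of_lt, h]
    rw [h, h, MonomialOrder.lex_lt_iff, Finsupp.Lex.lt_iff]
    exact ⟨0, fun j hj => absurd hj (by simp), by simp⟩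
  · simp [covectorParam, MonomialOrder.degree_X]
  · simp [covectorParam, MonomialOrder.degree_X]

theorem covectorParam_ne_zero (i : Fin 3) : covectorParam i ≠ 0 := by
  refine MonomialOrder.ne_zero_of_degree_ne_zero (m := MonomialOrder.lex) ?_
  rw [degree_covectorParam]
  fin_cases i <;> simp

theorem contentImage_ne_zero (A B C : Multiset (Fin 3)) : contentImage A B C ≠ 0 := by
  have h : ∀ f : Fin 3 → MvPolynomial (Fin 7) ℚ, (∀ i, f i ≠ 0) → ∀ s : Multiset (Fin 3),
      (s.map f).prod ≠ 0 := by
    intro f hf s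
    rw [Ne, Multiset.prod_eq_zero_iff, Multiset.mem_map]
    rintro ⟨i, -, hi⟩
    exact hf i hi
  exact mul_ne_zero (mul_ne_zero (h _ rowParam_ne_zero A) (h _ colParam_ne_zero B))
    (h _ covectorParam_ne_zero C)

theorem degree_contentImage (A B C : Multiset (Fin 3)) :
    ⇑(MonomialOrder.lex.degree (contentImage A B C)) =
      ![A.count 1 + C.count 0, A.count 2, B.count 0, B.count 1, B.count 2,
        C.count 0 + C.count 1, C.count 2] := by
  have hne := contentImage_ne_zero A B C
  rw [contentImage] at hne ⊢
  rw [MonomialOrder.degree_mul' hne,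
    MonomialOrder.degree_mul' (left_ne_zero_of_mul hne),
    MonomialOrder.degree_multiset_prod_map _ rowParam_ne_zero,
    MonomialOrder.degree_multiset_prod_map _ colParam_ne_zero,
    MonomialOrder.degree_multiset_prod_map _ covectorParam_ne_zero]
  simp only [Multiset.sum_map_eq_sum_count_nsmul, degree_rowParam, degree_colParam,
    degree_covectorParam, Fin.sum_univ_three]
  funext i
  fin_cases i <;> simp

/-- Triples of row, column and covector contents indexing a basis of the coordinate ring of the
cone over the base locus. -/
def StandardContent : Type :=
  {x : Multiset (Fin 3) × Multiset (Fin 3) × Multiset (Fin 3) //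
    x.1.card = x.2.1.card ∧ (0 ∉ x.1 ∨ 0 ∉ x.2.2)}

theorem linearIndependent_contentImage : LinearIndependent ℚ
    fun x : StandardContent => contentImage x.1.1 x.1.2.1 x.1.2.2 := by
  refine MonomialOrder.linearIndependent_of_injective_degree MonomialOrder.lex
    (fun x => contentImage_ne_zero _ _ _) ?_
  rintro ⟨⟨A, B, C⟩, hcard, hz⟩ ⟨⟨A', B', C'⟩, hcard', hz'⟩ h
  have h := congrArg (fun d : Fin 7 →₀ ℕ => (d : Fin 7 → ℕ)) h
  simp only [degree_contentImage] at h
  have hc : ∀ s : Multiset (Fin 3), s.card = s.count 0 + s.count 1 + s.count 2 := by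
    intro s
    rw [← Multiset.sum_count_eq_card (s := Finset.univ) (by simp), Fin.sum_univ_three]
  simp only [hc, ← Multiset.count_eq_zero] at hcard hcard' hz hz'
  have h0 := congrFun h 0
  have h1 := congrFun h 1
  have h2 := congrFun h 2
  have h3 := congrFun h 3
  have h4 := congrFun h 4
  have h5 := congrFun h 5
  have h6 := congrFun h 6
  simp at h0 h1 h2 h3 h4 h5 h6
  refine Subtype.ext (Prod.ext ?_ (Prod.ext ?_ ?_)) <;> ext i <;> fin_cases i <;> simp <;> omega

/-- A product of entries of the matrix and of the covector. -/
def segreProd (s : Multiset (Fin 3 × Fin 3)) (C : Multiset (Fin 3)) : MvPolynomial (Fin 12) ℚ :=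
  (s.map segreEntry).prod * (C.map segreCovector).prod

theorem coneParam_segreProd (s : Multiset (Fin 3 × Fin 3)) (C : Multiset (Fin 3)) :
    coneParam (segreProd s C) = contentImage (s.map Prod.fst) (s.map Prod.snd) C := by
  simp only [segreProd, contentImage, map_mul, map_multiset_prod, Multiset.map_map,
    Function.comp_def, coneParam_segreEntry, coneParam_segreCovector, Multiset.prod_map_mul]

theorem segreProd_sub_segreProd_mem {s s' : Multiset (Fin 3 × Fin 3)} (C : Multiset (Fin 3))
    (h₁ : s.map Prod.fst = s'.map Prod.fst) (h₂ : s.map Prod.snd = s'.map Prod.snd) :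
    segreProd s C - segreProd s' C ∈ idealOmegaP11 := by
  have h := Multiset.prod_map_eq_of_map_fst_eq_of_map_snd_eq
    (f := fun p => Ideal.Quotient.mk idealOmegaP11 (segreEntry p)) (fun a a' b b' => by
      rw [← map_mul, ← map_mul, Ideal.Quotient.eq]
      exact segreEntry_minor_mem a a' b b') h₁ h₂
  rw [← Ideal.Quotient.eq, segreProd, segreProd, map_mul, map_mul, map_multiset_prod,
    map_multiset_prod (Ideal.Quotient.mk idealOmegaP11) (s'.map _), Multiset.map_map,
    Multiset.map_map]
  exact congrArg (· * _) h

/-- A product of linear forms with the given standard content. -/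
def standardRep (x : StandardContent) : MvPolynomial (Fin 12) ℚ :=
  segreProd (Multiset.exists_map_fst_eq_map_snd_eq x.2.1).choose x.1.2.2

theorem coneParam_standardRep (x : StandardContent) :
    coneParam (standardRep x) = contentImage x.1.1 x.1.2.1 x.1.2.2 := by
  obtain ⟨h₁, h₂⟩ := (Multiset.exists_map_fst_eq_map_snd_eq x.2.1).choose_spec
  rw [standardRep, coneParam_segreProd, h₁, h₂]

/-- The degree of a product of linear forms with the given standard content. -/
def StandardContent.degree (x : StandardContent) : ℕ := x.1.2.1.card + x.1.2.2.card

theorem segreEntry_isHomogeneous (p : Fin 3 × Fin 3) : (segreEntry p).IsHomogeneous 1 := by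
  obtain ⟨i, j⟩ := p
  fin_cases i <;> fin_cases j <;>
    first
    | exact isHomogeneous_X _ _
    | exact (isHomogeneous_X _ _).sub (isHomogeneous_X _ _)

theorem segreCovector_isHomogeneous (k : Fin 3) : (segreCovector k).IsHomogeneous 1 := by
  fin_cases k <;>
    first
    | exact isHomogeneous_X _ _
    | exact (isHomogeneous_X _ _).neg

theorem MvPolynomial.IsHomogeneous.multiset_prod_map {σ ι R : Type*} [CommSemiring R]
    {f : ι → MvPolynomial σ R} (hf : ∀ i, (f i).IsHomogeneous 1) (s : Multiset ι) :
    (s.map f).prod.IsHomogeneous s.card := by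
  induction s using Multiset.induction_on with
  | empty => simpa using isHomogeneous_one σ R
  | cons a s ih =>
    rw [Multiset.map_cons, Multiset.prod_cons, Multiset.card_cons, add_comm]
    exact (hf a).mul ih

theorem segreProd_isHomogeneous (s : Multiset (Fin 3 × Fin 3)) (C : Multiset (Fin 3)) :
    (segreProd s C).IsHomogeneous (s.card + C.card) :=
  (IsHomogeneous.multiset_prod_map segreEntry_isHomogeneous s).mul
    (IsHomogeneous.multiset_prod_map segreCovector_isHomogeneous C)

theorem standardRep_isHomogeneous (x : StandardContent) :
    (standardRep x).IsHomogeneous x.degree := by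
  have h := (Multiset.exists_map_fst_eq_map_snd_eq x.2.1).choose_spec.2
  have := segreProd_isHomogeneous
    (Multiset.exists_map_fst_eq_map_snd_eq x.2.1).choose x.1.2.2
  rwa [← Multiset.card_map Prod.snd, h] at this

theorem segreProd_mem_sup (s : Multiset (Fin 3 × Fin 3)) (C : Multiset (Fin 3)) :
    segreProd s C ∈ idealOmegaP11.restrictScalars ℚ ⊔
      Submodule.span ℚ (standardRep '' {x | x.degree = s.card + C.card}) := by
  induction hn : C.count 0 using Nat.strong_induction_on generalizing s C with
  | _ n ih =>
  by_cases hz : 0 ∉ s.map Prod.fst ∨ 0 ∉ C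
  · let x : StandardContent := ⟨(s.map Prod.fst, s.map Prod.snd, C), by simp, hz⟩
    obtain ⟨h₁, h₂⟩ := (Multiset.exists_map_fst_eq_map_snd_eq x.2.1).choose_spec
    rw [← sub_add_cancel (segreProd s C) (standardRep x)]
    refine Submodule.add_mem_sup ?_ (Submodule.subset_span ⟨x, ?_, rfl⟩)
    · exact segreProd_sub_segreProd_mem C h₁.symm h₂.symm
    · exact congrArg (· + C.card) (Multiset.card_map _ _)
  · push Not at hz
    obtain ⟨⟨_, j⟩, hmem, rfl⟩ := Multiset.mem_map.1 hz.1
    obtain ⟨s, rfl⟩ := Multiset.exists_cons_of_mem hmem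
    obtain ⟨C, rfl⟩ := Multiset.exists_cons_of_mem hz.2
    have h : segreProd ((0, j) ::ₘ s) (0 ::ₘ C) = segreProd s C *
        (segreEntry (0, j) * segreCovector 0 + segreEntry (1, j) * segreCovector 1 +
          segreEntry (2, j) * segreCovector 2) -
        (segreProd ((1, j) ::ₘ s) (1 ::ₘ C) + segreProd ((2, j) ::ₘ s) (2 ::ₘ C)) := by
      simp only [segreProd, Multiset.map_cons, Multiset.prod_cons]
      ring
    rw [h]
    have hstep : ∀ k : Fin 3, k ≠ 0 → segreProd ((k, j) ::ₘ s) (k ::ₘ C) ∈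
        idealOmegaP11.restrictScalars ℚ ⊔ Submodule.span ℚ
          (standardRep '' {x | x.degree = ((0, j) ::ₘ s).card + ((0 : Fin 3) ::ₘ C).card}) := by
      intro k hk
      have := ih (C.count 0) (by rw [← hn]; simp) ((k, j) ::ₘ s) (k ::ₘ C)
        (Multiset.count_cons_of_ne hk.symm C)
      simpa using this
    refine sub_mem (Submodule.mem_sup_left ?_)
      (add_mem (hstep 1 (by decide)) (hstep 2 (by decide)))
    exact Ideal.mul_mem_left _ _ (segreCovector_mul_segreEntry_mem j)

/-- The span of the products of `t` entries of the matrix and of the covector. -/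
def segreSpan (t : ℕ) : Submodule ℚ (MvPolynomial (Fin 12) ℚ) :=
  Submodule.span ℚ {f | ∃ s C, s.card + C.card = t ∧ segreProd s C = f}

theorem segreProd_mem_segreSpan (s : Multiset (Fin 3 × Fin 3)) (C : Multiset (Fin 3)) :
    segreProd s C ∈ segreSpan (s.card + C.card) :=
  Submodule.subset_span ⟨s, C, rfl, rfl⟩

theorem segreSpan_mul_le (t u : ℕ) : segreSpan t * segreSpan u ≤ segreSpan (t + u) := by
  rw [segreSpan, segreSpan, Submodule.span_mul_span, Submodule.span_le]
  rintro _ ⟨_, ⟨s, C, rfl, rfl⟩, _, ⟨s', C', rfl, rfl⟩, rfl⟩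
  have h : segreProd s C * segreProd s' C' = segreProd (s + s') (C + C') := by
    simp only [segreProd, Multiset.map_add, Multiset.prod_add]
    ring
  have hc : s.card + C.card + (s'.card + C'.card) = (s + s').card + (C + C').card := by
    simp only [Multiset.card_add]
    ring
  change segreProd s C * segreProd s' C' ∈ segreSpan _
  rw [h, hc]
  exact segreProd_mem_segreSpan _ _

theorem X_mem_segreSpan (i : Fin 12) : X i ∈ segreSpan 1 := by
  have hL : ∀ p, segreEntry p ∈ segreSpan 1 := fun p => by
    simpa [segreProd] using segreProd_mem_segreSpan {p} 0
  have hV : ∀ k, segreCovector k ∈ segreSpan 1 := fun k => by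
    simpa [segreProd] using segreProd_mem_segreSpan 0 {k}
  have h4 : X 4 ∈ segreSpan 1 := neg_mem_iff.1 (hV 0)
  fin_cases i
  · exact hL (2, 0)
  · have h : (X 1 : MvPolynomial (Fin 12) ℚ) = X 4 - (X 4 - X 1) := by ring
    exact h ▸ sub_mem h4 (hL (2, 2))
  · exact hL (1, 0)
  · exact hL (2, 1)
  · exact h4
  · exact hL (1, 1)
  · exact hL (1, 2)
  · exact hV 1
  · exact hL (0, 0)
  · exact hV 2
  · exact hL (0, 1)
  · exact hL (0, 2)

theorem homogeneousSubmodule_le_segreSpan (t : ℕ) :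
    homogeneousSubmodule (Fin 12) ℚ t ≤ segreSpan t := by
  induction t with
  | zero =>
    rw [homogeneousSubmodule_zero, Submodule.one_le]
    simpa [segreProd] using segreProd_mem_segreSpan 0 0
  | succ t ih =>
    rw [← homogeneousSubmodule_one_pow, pow_succ, homogeneousSubmodule_one_pow]
    refine (mul_le_mul' ih ?_).trans (segreSpan_mul_le t 1)
    rw [homogeneousSubmodule_one_eq_span_X, Submodule.span_le]
    rintro _ ⟨i, rfl⟩
    exact X_mem_segreSpan i

theorem homogeneousSubmodule_le_sup (t : ℕ) :
    homogeneousSubmodule (Fin 12) ℚ t ≤ idealOmegaP11.restrictScalars ℚ ⊔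
      Submodule.span ℚ (standardRep '' {x | x.degree = t}) := by
  refine (homogeneousSubmodule_le_segreSpan t).trans (Submodule.span_le.2 ?_)
  rintro _ ⟨s, C, rfl, rfl⟩
  exact segreProd_mem_sup s C

theorem ker_coneParam_le : RingHom.ker coneParam ≤ idealOmegaP11 := by
  intro f hf
  have hmem : f ∈ idealOmegaP11.restrictScalars ℚ ⊔
      Submodule.span ℚ (Set.range standardRep) := by
    rw [← sum_homogeneousComponent f]
    refine sum_mem fun t _ => ?_
    refine (homogeneousSubmodule_le_sup t).trans
      (sup_le_sup_left (Submodule.span_mono (Set.image_subset_range _ _)) _) ?_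
    exact homogeneousComponent_isHomogeneous t f
  obtain ⟨g, hg, n, hn, rfl⟩ := Submodule.mem_sup.1 hmem
  rw [RingHom.mem_ker, map_add, RingHom.mem_ker.1 (idealOmegaP11_le_ker hg), zero_add] at hf
  obtain ⟨c, rfl⟩ := (Finsupp.mem_span_range_iff_exists_finsupp).1 hn
  have hc : c = 0 := by
    refine linearIndependent_iff.1 linearIndependent_contentImage c ?_
    rw [Finsupp.linearCombination_apply, ← hf, map_finsuppSum]
    simp only [map_smul, coneParam_standardRep]
  simpa [hc] using hg

theorem idealOmegaP11Sat_eq_ker : idealOmegaP11Sat = RingHom.ker coneParam :=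
  le_antisymm idealOmegaP11Sat_le_ker (ker_coneParam_le.trans idealOmegaP11_le_sat)

theorem map_coneParam_homogeneousSubmodule (t : ℕ) :
    (homogeneousSubmodule (Fin 12) ℚ t).map coneParam.toLinearMap =
      Submodule.span ℚ (Set.range fun x : {x : StandardContent // x.degree = t} =>
        contentImage x.1.1.1 x.1.1.2.1 x.1.1.2.2) := by
  apply le_antisymm
  · refine (Submodule.map_mono (homogeneousSubmodule_le_sup t)).trans ?_
    rw [Submodule.map_sup, Submodule.map_span, sup_le_iff]
    constructor
    · rintro _ ⟨f, hf, rfl⟩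
      rw [AlgHom.toLinearMap_apply, RingHom.mem_ker.1 (idealOmegaP11_le_ker hf)]
      exact zero_mem _
    · refine Submodule.span_mono ?_
      rintro _ ⟨_, ⟨x, hx, rfl⟩, rfl⟩
      exact ⟨⟨x, hx⟩, (coneParam_standardRep x).symm⟩
  · rw [Submodule.span_le]
    rintro _ ⟨⟨x, rfl⟩, rfl⟩
    exact ⟨standardRep x, standardRep_isHomogeneous x, coneParam_standardRep x⟩

theorem MonomialOrder.algebraicIndependent_of_injective_degree {σ ι k : Type*} [Fintype ι]
    [Field k] (m : MonomialOrder σ) {f : ι → MvPolynomial σ k} (hf : ∀ i, f i ≠ 0)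
    (hinj : Function.Injective fun d : ι →₀ ℕ => ∑ i, d i • m.degree (f i)) :
    AlgebraicIndependent k f := by
  have hmon : ∀ d : ι →₀ ℕ, aeval f (basisMonomials ι k d) = ∏ i, f i ^ d i := fun d => by
    rw [coe_basisMonomials, aeval_monomial, map_one, one_mul, Finsupp.prod_fintype _ _ (by simp)]
  have hli : LinearIndependent k ((aeval f).toLinearMap ∘ basisMonomials ι k) := by
    refine m.linearIndependent_of_injective_degree (fun d => ?_) ?_
    · rw [Function.comp_apply, AlgHom.toLinearMap_apply, hmon]
      exact Finset.prod_ne_zero_iff.2 fun i _ => pow_ne_zero _ (hf i)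
    · convert! hinj using 2 with d
      rw [Function.comp_apply, AlgHom.toLinearMap_apply, hmon,
        m.degree_prod fun i _ => pow_ne_zero _ (hf i)]
      simp only [m.degree_pow]
  rw [algebraicIndependent_iff_injective_aeval, injective_iff_map_eq_zero]
  intro p hp
  rw [← (basisMonomials ι k).repr.map_eq_zero_iff]
  refine linearIndependent_iff.1 hli _ ?_
  rw [← Finsupp.apply_linearCombination, Module.Basis.linearCombination_repr]
  exact hp

theorem algebraicIndependent_coneParam : AlgebraicIndependent ℚ fun i : Fin 7 =>
    coneParam ((![X 8, X 10, X 11, X 2, X 0, X 7, X 9] : Fin 7 → MvPolynomial _ ℚ) i) := by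
  have hdeg : ∀ i : Fin 7, MonomialOrder.lex.degree (coneParam
      ((![X 8, X 10, X 11, X 2, X 0, X 7, X 9] : Fin 7 → MvPolynomial _ ℚ) i)) =
      ![Finsupp.single 2 1, Finsupp.single 3 1, Finsupp.single 4 1,
        Finsupp.single 0 1 + Finsupp.single 2 1, Finsupp.single 1 1 + Finsupp.single 2 1,
        Finsupp.single 5 1, Finsupp.single 6 1] i := by
    intro i
    fin_cases i <;> simp [coneParam, MonomialOrder.degree_X, MonomialOrder.degree_mul]
  refine MonomialOrder.lex.algebraicIndependent_of_injective_degree (fun i => ?_) ?_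
  · refine MonomialOrder.ne_zero_of_degree_ne_zero (m := MonomialOrder.lex) ?_
    rw [hdeg]
    fin_cases i <;> simp
  · intro d d' h
    have h (j : Fin 7) := DFunLike.congr_fun h j
    simp only [hdeg, Fin.sum_univ_seven] at h
    have h0 := h 0
    have h1 := h 1
    have h2 := h 2
    have h3 := h 3
    have h4 := h 4
    have h5 := h 5
    have h6 := h 6
    simp at h0 h1 h2 h3 h4 h5 h6
    ext i
    fin_cases i <;> simp <;> omega

theorem trdeg_coneParam_range : Algebra.trdeg ℚ coneParam.range = 7 := by
  apply le_antisymm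
  · refine (trdeg_le_of_injective coneParam.range.val Subtype.val_injective).trans ?_
    rw [MvPolynomial.trdeg_of_isDomain]
    simp
  · have h : AlgebraicIndependent ℚ fun i : Fin 7 => coneParam.rangeRestrict
        ((![X 8, X 10, X 11, X 2, X 0, X 7, X 9] : Fin 7 → MvPolynomial _ ℚ) i) :=
      .of_comp coneParam.range.val algebraicIndependent_coneParam
    simpa using h.cardinalMk_le_trdeg

theorem ringKrullDim_quotient_idealOmegaP11Sat :
    ringKrullDim (MvPolynomial (Fin 12) ℚ ⧸ idealOmegaP11Sat) = (7 : ℕ) := by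
  rw [idealOmegaP11Sat_eq_ker,
    ringKrullDim_eq_of_ringEquiv (Ideal.quotientKerEquivRange coneParam).toRingEquiv]
  have : Algebra.FiniteType ℚ coneParam.range :=
    .of_surjective coneParam.rangeRestrict coneParam.rangeRestrict_surjective
  rw [ringKrullDim_eq_toNat_trdeg ℚ coneParam.range, trdeg_coneParam_range]
  simp

instance (t : ℕ) : FiniteDimensional ℚ (homogeneousSubmodule (Fin 12) ℚ t) :=
  Module.Finite.iff_fg.2 (homogeneousSubmodule_fg _ _ t)

theorem finrank_homogeneousSubmodule_sub (t : ℕ) :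
    ((Module.finrank ℚ ↥(homogeneousSubmodule (Fin 12) ℚ t) : ℤ) -
        (Module.finrank ℚ ↥(homogeneousSubmodule (Fin 12) ℚ t ⊓
          Submodule.restrictScalars ℚ idealOmegaP11Sat) : ℤ)) =
      Nat.card {x : StandardContent // x.degree = t} := by
  set H := homogeneousSubmodule (Fin 12) ℚ t
  have h := (coneParam.toLinearMap.domRestrict H).finrank_range_add_finrank_ker
  have hker : H ⊓ idealOmegaP11Sat.restrictScalars ℚ =
      (coneParam.toLinearMap.domRestrict H).ker.map H.subtype := by
    rw [LinearMap.ker_domRestrict, Submodule.map_comap_subtype, idealOmegaP11Sat_eq_ker]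
    rfl
  have hli := linearIndependent_contentImage.comp
    (Subtype.val : {x : StandardContent // x.degree = t} → StandardContent)
    Subtype.val_injective
  have hspan : Module.finrank ℚ (coneParam.toLinearMap.domRestrict H).range =
      Nat.card {x : StandardContent // x.degree = t} := by
    rw [LinearMap.range_domRestrict, map_coneParam_homogeneousSubmodule]
    exact Module.finrank_eq_nat_card_basis (Module.Basis.span hli)
  rw [hker, Submodule.finrank_map_subtype_eq, ← hspan, ← h]
  push_cast
  ring

/-- Standard contents of degree `t` as multisets of prescribed cardinality. -/
def standardContentEquiv (t : ℕ) : {x : StandardContent // x.degree = t} ≃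
    Σ n : Fin (t + 1), Sym (Fin 3) n ×
      {p : Sym (Fin 3) n × Sym (Fin 3) (t - n) // 0 ∉ p.1 ∨ 0 ∉ p.2} where
  toFun x := ⟨⟨x.1.1.2.1.card, Nat.lt_succ_of_le ((Nat.le_add_right _ _).trans_eq x.2)⟩,
    ⟨x.1.1.2.1, rfl⟩, ⟨(⟨x.1.1.1, x.1.2.1⟩,
      ⟨x.1.1.2.2, (Nat.sub_eq_of_eq_add' x.2.symm).symm⟩), x.1.2.2⟩⟩
  invFun y := ⟨⟨(y.2.2.1.1.1, y.2.1.1, y.2.2.1.2.1),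
      y.2.2.1.1.2.trans y.2.1.2.symm, y.2.2.2⟩, by
    change y.2.1.1.card + y.2.2.1.2.1.card = t
    rw [y.2.1.2, y.2.2.1.2.2]
    omega⟩
  left_inv _ := rfl
  right_inv := by
    rintro ⟨⟨n, hn⟩, ⟨B, hB⟩, ⟨⟨A, hA⟩, ⟨C, hC⟩⟩, h⟩
    change B.card = n at hB
    subst hB
    rfl

theorem Sym.card_fin_three (n : ℕ) : Fintype.card (Sym (Fin 3) n) = (n + 2).choose 2 := by
  rw [Sym.card_sym_eq_choose, Fintype.card_fin, ← Nat.choose_symm_add]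
  congr 1
  omega

theorem Sym.card_zero_mem_fin_three (n : ℕ) :
    Fintype.card {s : Sym (Fin 3) n // 0 ∈ s} = (n + 1).choose 2 := by
  cases n with
  | zero =>
    simp only [Fintype.card_eq_zero_iff, isEmpty_subtype,
      Nat.choose_eq_zero_of_lt (show 0 + 1 < 2 by norm_num)]
    exact fun s => Sym.eq_nil_of_card_zero s ▸ Sym.notMem_nil 0
  | succ n => rw [← Sym.card_fin_three, Fintype.card_congr Sym.e1]

theorem Fintype.card_subtype_or_add {α β : Type*} [Fintype α] [Fintype β] (p : α → Prop)
    (q : β → Prop) [DecidablePred p] [DecidablePred q] :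
    Fintype.card {x : α × β // ¬ p x.1 ∨ ¬ q x.2} +
      Fintype.card {a // p a} * Fintype.card {b // q b} = Fintype.card α * Fintype.card β := by
  classical
  rw [← Fintype.card_prod, ← Fintype.card_prod, ← Fintype.card_congr Equiv.subtypeProdEquivProd,
    Fintype.card_congr (Equiv.subtypeEquivRight fun x : α × β =>
      (not_and_or (a := p x.1) (b := q x.2)).symm),
    Fintype.card_subtype_compl, Nat.sub_add_cancel (Fintype.card_subtype_le _)]

theorem card_standardContent (t : ℕ) :
    (Nat.card {x : StandardContent // x.degree = t} : ℤ) =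
      ∑ n ∈ Finset.range (t + 1), ((n + 2).choose 2 : ℤ) *
        ((n + 2).choose 2 * (t - n + 2).choose 2 - (n + 1).choose 2 * (t - n + 1).choose 2) := by
  rw [Nat.card_congr (standardContentEquiv t), Nat.card_eq_fintype_card, Fintype.card_sigma,
    ← Fin.sum_univ_eq_sum_range fun n => ((n + 2).choose 2 : ℤ) *
        ((n + 2).choose 2 * (t - n + 2).choose 2 - (n + 1).choose 2 * (t - n + 1).choose 2)]
  push_cast
  refine Finset.sum_congr rfl fun n _ => ?_
  rw [Fintype.card_prod, Sym.card_fin_three, Nat.cast_mul]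
  congr 1
  rw [eq_sub_iff_add_eq, ← Sym.card_fin_three, ← Sym.card_fin_three,
    ← Sym.card_zero_mem_fin_three, ← Sym.card_zero_mem_fin_three]
  exact_mod_cast Fintype.card_subtype_or_add (fun s : Sym (Fin 3) n => 0 ∈ s)
    (fun s : Sym (Fin 3) (t - n) => 0 ∈ s)

theorem Nat.cast_add_choose_right {K : Type*} [Field K] [CharZero K] (n k : ℕ) :
    ((n + k).choose k : K) = (∏ i ∈ Finset.range k, ((n : K) + 1 + i)) / k.factorial := by
  rw [eq_div_iff (Nat.cast_ne_zero.2 k.factorial_ne_zero), mul_comm, ← Nat.cast_mul,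
    ← Nat.ascFactorial_eq_factorial_mul_choose, Nat.ascFactorial_eq_prod_range]
  push_cast
  rfl

theorem sum_range_choose_two (T : ℚ) (m : ℕ) :
    ∑ n ∈ Finset.range m, ((n + 1) * (n + 2) / 2 : ℚ) *
      ((n + 1) * (n + 2) / 2 * ((T - n + 1) * (T - n + 2) / 2) -
        n * (n + 1) / 2 * ((T - n) * (T - n + 1) / 2)) =
      (44 * m + 42 * m * T + 10 * m * T ^ 2 + 150 * m ^ 2 + 165 * m ^ 2 * T + 45 * m ^ 2 * T ^ 2 +
        100 * m ^ 3 + 150 * m ^ 3 * T + 50 * m ^ 3 * T ^ 2 - 30 * m ^ 4 + 15 * m ^ 4 * T +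
        15 * m ^ 4 * T ^ 2 - 24 * m ^ 5 - 12 * m ^ 5 * T) / 240 := by
  induction m with
  | zero => simp
  | succ m ih =>
    rw [Finset.sum_range_succ, ih]
    push_cast
    ring

theorem card_standardContent_eq (t : ℕ) :
    (Nat.card {x : StandardContent // x.degree = t} : ℤ) =
      3 * ((t + 4).choose 4 : ℤ) - 11 * ((t + 5).choose 5 : ℤ) + 9 * ((t + 6).choose 6 : ℤ) := by
  have h := sum_range_choose_two t (t + 1)
  have key : ((Nat.card {x : StandardContent // x.degree = t} : ℤ) : ℚ) =
      3 * ((t + 4).choose 4 : ℚ) - 11 * ((t + 5).choose 5 : ℚ) + 9 * ((t + 6).choose 6 : ℚ) := by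
    rw [card_standardContent]
    push_cast
    refine (Finset.sum_congr rfl fun n hn => ?_).trans (h.trans ?_)
    · have hn : n ≤ t := Nat.le_of_lt_succ (Finset.mem_range.1 hn)
      rw [Nat.cast_choose_two, Nat.cast_choose_two, Nat.cast_choose_two, Nat.cast_choose_two]
      push_cast [hn]
      rw [show ((n : ℚ) + 2) * (n + 2 - 1) / 2 = (n + 1) * (n + 2) / 2 by ring,
        show ((t : ℚ) - n + 2) * (t - n + 2 - 1) / 2 = (t - n + 1) * (t - n + 2) / 2 by ring,
        show ((n : ℚ) + 1) * (n + 1 - 1) / 2 = n * (n + 1) / 2 by ring,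
        show ((t : ℚ) - n + 1) * (t - n + 1 - 1) / 2 = (t - n) * (t - n + 1) / 2 by ring]
    · rw [Nat.cast_add_choose_right, Nat.cast_add_choose_right, Nat.cast_add_choose_right]
      simp only [Finset.prod_range_succ, Finset.prod_range_zero, Nat.factorial]
      push_cast
      ring
  exact_mod_cast key

/-- The base locus `X ⊂ ℙ¹¹` of the Cremona transformation `ω` has dimension `6`
(its affine cone has Krull dimension `7`) and degree `9`, with Hilbert polynomial
`P(t) = 3·C(t+4,4) − 11·C(t+5,5) + 9·C(t+6,6)`. -/
theorem base_locus_cremonaP11 :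
    ringKrullDim (MvPolynomial (Fin 12) ℚ ⧸ idealOmegaP11Sat) = (7 : ℕ) ∧
    ∃ N : ℕ, ∀ t ≥ N,
      ((Module.finrank ℚ ↥(homogeneousSubmodule (Fin 12) ℚ t) : ℤ) -
        (Module.finrank ℚ ↥(homogeneousSubmodule (Fin 12) ℚ t ⊓
          Submodule.restrictScalars ℚ idealOmegaP11Sat) : ℤ)) =
      3 * ((t + 4).choose 4 : ℤ) - 11 * ((t + 5).choose 5 : ℤ) +
        9 * ((t + 6).choose 6 : ℤ) :=
  ⟨ringKrullDim_quotient_idealOmegaP11Sat, 0, fun t _ =>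
    (finrank_homogeneousSubmodule_sub t).trans (card_standardContent_eq t)⟩

end
end

section
/- The 8 quadratic forms in t_0,...,t_7: −t_1t_4+t_0t_5, −t_2t_4+t_0t_6, −t_3t_4+t_0t_7, −t_2t_5+t_1t_6, −t_3t_5+t_1t_7, −t_3t_6+t_2t_7, t_0²+t_2²+t_3²+t_1t_5+t_1t_6+t_0t_7, t_0t_4+t_5²+t_2t_6+t_5t_6+t_3t_7+t_4t_7 define a projective scheme E ⊂ P^7 of dimension 3 and degree 7. -/
open MvPolynomial

noncomputable section

/-- Coordinates `t₀, …, t₇` on `ℙ⁷`. -/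
abbrev tP7 : Fin 8 → MvPolynomial (Fin 8) ℚ := X

/-- The 8 quadrics cutting out the degenerate 3-dimensional Edge variety `E ⊂ ℙ⁷`. -/
def edgeQuadrics : Fin 8 → MvPolynomial (Fin 8) ℚ :=
  ![-(tP7 1 * tP7 4) + tP7 0 * tP7 5,
    -(tP7 2 * tP7 4) + tP7 0 * tP7 6,
    -(tP7 3 * tP7 4) + tP7 0 * tP7 7,
    -(tP7 2 * tP7 5) + tP7 1 * tP7 6,
    -(tP7 3 * tP7 5) + tP7 1 * tP7 7,
    -(tP7 3 * tP7 6) + tP7 2 * tP7 7,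
    tP7 0 ^ 2 + tP7 2 ^ 2 + tP7 3 ^ 2 + tP7 1 * tP7 5 + tP7 1 * tP7 6 + tP7 0 * tP7 7,
    tP7 0 * tP7 4 + tP7 5 ^ 2 + tP7 2 * tP7 6 + tP7 5 * tP7 6 + tP7 3 * tP7 7 +
      tP7 4 * tP7 7]

/-- The ideal generated by the 8 quadrics. -/
def idealEdge : Ideal (MvPolynomial (Fin 8) ℚ) := Ideal.span (Set.range edgeQuadrics)

/-- Its saturation with respect to the irrelevant maximal ideal. -/
def idealEdgeSat : Ideal (MvPolynomial (Fin 8) ℚ) :=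
  ⨆ t : ℕ, idealEdge.colon
    ((Ideal.span (Set.range (X : Fin 8 → MvPolynomial (Fin 8) ℚ)) ^ t :
      Ideal (MvPolynomial (Fin 8) ℚ)) : Submodule _ _)

section Segre

variable {k ι ρ κ : Type*} [Field k] (e : ι ≃ ρ × κ)

/-- The Segre map `t_{(r,c)} ↦ s_r x_c`. -/
def segre : MvPolynomial ι k →ₐ[k] MvPolynomial (ρ ⊕ κ) k :=
  aeval fun i => X (Sum.inl (e i).1) * X (Sum.inr (e i).2)

/-- The effect of the Segre map on exponent vectors. -/
def segreExp (d : ι →₀ ℕ) : ρ ⊕ κ →₀ ℕ :=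
  d.mapDomain (fun i => Sum.inl (e i).1) + d.mapDomain fun i => Sum.inr (e i).2

lemma segreExp_inl (d : ι →₀ ℕ) (r : ρ) :
    segreExp e d (Sum.inl r) = d.mapDomain (fun i => (e i).1) r := by
  rw [segreExp, Finsupp.add_apply,
    Finsupp.mapDomain_of_notMem_range (f := fun i => (Sum.inr (e i).2 : ρ ⊕ κ)) _ _ (by simp), add_zero,
    show (fun i => (Sum.inl (e i).1 : ρ ⊕ κ)) = Sum.inl ∘ fun i => (e i).1 from rfl,
    Finsupp.mapDomain_comp, Finsupp.mapDomain_apply Sum.inl_injective]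

lemma segreExp_inr (d : ι →₀ ℕ) (c : κ) :
    segreExp e d (Sum.inr c) = d.mapDomain (fun i => (e i).2) c := by
  rw [segreExp, Finsupp.add_apply,
    Finsupp.mapDomain_of_notMem_range (f := fun i => (Sum.inl (e i).1 : ρ ⊕ κ)) _ _ (by simp), zero_add,
    show (fun i => (Sum.inr (e i).2 : ρ ⊕ κ)) = Sum.inr ∘ fun i => (e i).2 from rfl,
    Finsupp.mapDomain_comp, Finsupp.mapDomain_apply Sum.inr_injective]

lemma segre_monomial (d : ι →₀ ℕ) (a : k) :
    segre e (monomial d a) = monomial (segreExp e d) a := by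
  induction d using Finsupp.induction_linear generalizing a with
  | zero => simp [segreExp, segre, ← C_apply]
  | add f g hf hg =>
    have : monomial (f + g) a = monomial f a * monomial g (1 : k) := by
      simp [monomial_mul]
    rw [this, map_mul, hf, hg, monomial_mul, mul_one]
    congr 1
    rw [segreExp, segreExp, segreExp, Finsupp.mapDomain_add, Finsupp.mapDomain_add,
      add_add_add_comm]
  | single i n =>
    rw [show segre (k := k) e (monomial (Finsupp.single i n) a) =
      C a * (X (Sum.inl (e i).1) * X (Sum.inr (e i).2)) ^ n by
        rw [← C_mul_X_pow_eq_monomial]; simp [segre]]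
    simp only [segreExp, Finsupp.mapDomain_single]
    rw [mul_pow, X_pow_eq_monomial, X_pow_eq_monomial, monomial_mul, C_mul_monomial]
    simp

/-- Two products of entries of a generic matrix with the same row and column contents agree
modulo the `2 × 2` minors. -/
lemma multiset_prod_sub_mem {J : Ideal (MvPolynomial ι k)}
    (hJ : ∀ i j, X i * X j - X (e.symm ((e i).1, (e j).2)) * X (e.symm ((e j).1, (e i).2)) ∈ J)
    (M M' : Multiset ι) (h₁ : M.map (fun i => (e i).1) = M'.map fun i => (e i).1)
    (h₂ : M.map (fun i => (e i).2) = M'.map fun i => (e i).2) :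
    (M.map (X : ι → MvPolynomial ι k)).prod - (M'.map X).prod ∈ J := by
  induction M using Multiset.induction generalizing M' with
  | empty =>
    have : M' = 0 := by simpa using h₁.symm
    simp [this]
  | cons i M ih =>
    have hi₂ : (e i).2 ∈ M'.map fun i => (e i).2 := by simp [← h₂]
    obtain ⟨j, hj, hji⟩ := Multiset.mem_map.1 hi₂
    obtain ⟨M', rfl⟩ := Multiset.exists_cons_of_mem hj
    have hi₁ : (e i).1 ∈ (j ::ₘ M').map fun i => (e i).1 := by simp [← h₁]
    simp only [Multiset.map_cons] at h₁ h₂ hi₁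
    by_cases hji' : (e j).1 = (e i).1
    · obtain rfl : i = j := e.injective (Prod.ext hji'.symm hji.symm)
      have := ih M' (by simpa using h₁) (by simpa using h₂)
      simpa [mul_sub] using J.mul_mem_left (X i) this
    · obtain hk | hk := Multiset.mem_cons.1 hi₁
      · exact absurd hk.symm hji'
      obtain ⟨l, hl, hli⟩ := Multiset.mem_map.1 hk
      obtain ⟨M', rfl⟩ := Multiset.exists_cons_of_mem hl
      set m := e.symm ((e j).1, (e l).2) with hm
      have h := ih (m ::ₘ M') (by
          rw [Multiset.map_cons, hli, Multiset.cons_swap] at h₁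
          simpa [hm] using h₁) (by
          rw [Multiset.map_cons, hji] at h₂
          simpa [hm] using h₂)
      have hmin := hJ j l
      have hi : e.symm ((e l).1, (e j).2) = i := by
        rw [hli, hji]; simp
      rw [hi, ← hm] at hmin
      have := J.sub_mem (J.mul_mem_left (X i) h) (J.mul_mem_right (M'.map X).prod hmin)
      convert this using 1
      simp only [Multiset.map_cons, Multiset.prod_cons]
      ring

lemma monomial_sub_mem {J : Ideal (MvPolynomial ι k)}
    (hJ : ∀ i j, X i * X j - X (e.symm ((e i).1, (e j).2)) * X (e.symm ((e j).1, (e i).2)) ∈ J)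
    {d d' : ι →₀ ℕ} (h : segreExp e d = segreExp e d') (a : k) :
    monomial d a - monomial d' a ∈ J := by
  have key : ∀ d : ι →₀ ℕ, monomial d (1 : k) = (d.toMultiset.map X).prod := fun d => by
    rw [Finsupp.toMultiset_map, Finsupp.prod_toMultiset, Finsupp.prod_mapDomain_index] <;>
      simp [pow_add, monomial_eq]
  have row : ∀ d : ι →₀ ℕ, d.toMultiset.map (fun i => (e i).1) =
      ((segreExp e d).comapDomain Sum.inl Sum.inl_injective.injOn).toMultiset := fun d => by
    rw [Finsupp.toMultiset_map]
    congr 1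
    ext r
    rw [Finsupp.comapDomain_apply, segreExp_inl]
  have col : ∀ d : ι →₀ ℕ, d.toMultiset.map (fun i => (e i).2) =
      ((segreExp e d).comapDomain Sum.inr Sum.inr_injective.injOn).toMultiset := fun d => by
    rw [Finsupp.toMultiset_map]
    congr 1
    ext r
    rw [Finsupp.comapDomain_apply, segreExp_inr]
  have := multiset_prod_sub_mem e hJ d.toMultiset d'.toMultiset
    (by rw [row, row, h]) (by rw [col, col, h])
  rw [← key, ← key] at this
  simpa [mul_sub, C_mul_monomial] using J.mul_mem_left (C a) this

/-- The kernel of the Segre map is generated by the `2 × 2` minors. -/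
lemma ker_segre_le {J : Ideal (MvPolynomial ι k)}
    (hJ : ∀ i j, X i * X j - X (e.symm ((e i).1, (e j).2)) * X (e.symm ((e j).1, (e i).2)) ∈ J) :
    RingHom.ker (segre (k := k) e) ≤ J := by
  let σ : MvPolynomial (ρ ⊕ κ) k →ₗ[k] MvPolynomial ι k :=
    (basisMonomials (ρ ⊕ κ) k).constr k fun d => monomial (Function.invFun (segreExp e) d) 1
  have hσ : ∀ d a, σ (monomial d a) = monomial (Function.invFun (segreExp e) d) a := fun d a => by
    have := (basisMonomials (ρ ⊕ κ) k).constr_basis k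
      (fun d => monomial (Function.invFun (segreExp e) d) (1 : k)) d
    rw [coe_basisMonomials] at this
    rw [show monomial d a = a • monomial d (1 : k) by simp [smul_monomial], map_smul]
    simp only [σ, this, smul_monomial, smul_eq_mul, mul_one]
  have key : ∀ f, f - σ (segre e f) ∈ J := fun f => by
    induction f using MvPolynomial.induction_on' with
    | monomial d a =>
      rw [segre_monomial, hσ]
      exact monomial_sub_mem e hJ (Function.invFun_eq ⟨d, rfl⟩).symm a
    | add p q hp hq =>
      rw [map_add, map_add, add_sub_add_comm]
      exact J.add_mem hp hq
  intro f hf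
  have := key f
  rwa [RingHom.mem_ker.1 hf, map_zero, sub_zero] at this

/-- The bidegree of the variables of the coordinate ring of a product of projective spaces. -/
def bidegree : ρ ⊕ κ → ℕ × ℕ := Sum.elim (fun _ => (1, 0)) fun _ => (0, 1)

/-- Bihomogeneous forms of given bidegree. -/
abbrev bihomogeneous (k ρ κ : Type*) [Field k] (a : ℕ × ℕ) :
    Submodule k (MvPolynomial (ρ ⊕ κ) k) :=
  weightedHomogeneousSubmodule k bidegree a

lemma weight_bidegree_segreExp (d : ι →₀ ℕ) :
    Finsupp.weight bidegree (segreExp e d) = (d.degree, d.degree) := by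
  induction d using Finsupp.induction_linear with
  | zero => simp [segreExp, Prod.zero_eq_mk]
  | add f g hf hg =>
    rw [show segreExp e (f + g) = segreExp e f + segreExp e g by
      rw [segreExp, segreExp, segreExp, Finsupp.mapDomain_add, Finsupp.mapDomain_add,
      add_add_add_comm], map_add, hf, hg]
    simp
  | single i n => simp [segreExp, bidegree, Finsupp.weight_single]

variable [Fintype ρ] [Fintype κ]

lemma weight_bidegree (x : ρ ⊕ κ →₀ ℕ) :
    Finsupp.weight bidegree x = (∑ r, x (Sum.inl r), ∑ c, x (Sum.inr c)) := by
  rw [Finsupp.weight_apply, Finsupp.sum_fintype _ _ (by simp), Fintype.sum_sum_type]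
  ext <;> simp [bidegree, Prod.fst_sum, Prod.snd_sum]

lemma exists_segreExp_eq {t : ℕ} {x : ρ ⊕ κ →₀ ℕ} (hx : Finsupp.weight bidegree x = (t, t)) :
    ∃ d : ι →₀ ℕ, d.degree = t ∧ segreExp e d = x := by
  induction t generalizing x with
  | zero =>
    refine ⟨0, by simp, ?_⟩
    rw [weight_bidegree] at hx
    ext i
    rcases i with i | i <;> simp_all [segreExp]
  | succ t ih =>
    have h := hx
    rw [weight_bidegree, Prod.mk.injEq] at h
    obtain ⟨r, -, hr⟩ := Finset.exists_ne_zero_of_sum_ne_zero (h.1.trans_ne t.succ_ne_zero)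
    obtain ⟨c, -, hc⟩ := Finset.exists_ne_zero_of_sum_ne_zero (h.2.trans_ne t.succ_ne_zero)
    have hle : Finsupp.single (Sum.inl r) 1 + Finsupp.single (Sum.inr c) 1 ≤ x := by
      classical
      intro i
      rcases i with i | i
      · simp only [Finsupp.add_apply, Finsupp.single_apply]
        grind
      · simp only [Finsupp.add_apply, Finsupp.single_apply]
        grind
    obtain ⟨y, rfl⟩ := exists_add_of_le hle
    obtain ⟨d, hd, hdy⟩ := ih (x := y) (by
      rw [map_add, map_add, Finsupp.weight_single, Finsupp.weight_single, add_comm t] at hx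
      have hx' : ((1, 1) : ℕ × ℕ) + Finsupp.weight bidegree y = (1, 1) + (t, t) := by
        simpa [bidegree] using hx
      exact add_left_cancel hx')
    refine ⟨Finsupp.single (e.symm (r, c)) 1 + d, by simp [hd, add_comm], ?_⟩
    rw [← hdy, segreExp, segreExp, Finsupp.mapDomain_add, Finsupp.mapDomain_add,
      add_add_add_comm]
    simp

lemma map_segre_homogeneousSubmodule (t : ℕ) :
    (homogeneousSubmodule ι k t).map (segre e).toLinearMap = bihomogeneous k ρ κ (t, t) := by
  rw [homogeneousSubmodule_eq_finsupp_supported, bihomogeneous,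
    weightedHomogeneousSubmodule_eq_finsupp_supported, AddMonoidAlgebra.supported_eq_span_single,
    AddMonoidAlgebra.supported_eq_span_single, Submodule.map_span]
  congr 1
  ext f
  constructor
  · rintro ⟨_, ⟨d, hd, rfl⟩, rfl⟩
    refine ⟨segreExp e d, ?_, (segre_monomial e d 1).symm⟩
    have hd : d.degree = t := by simpa [Finsupp.degree_eq_weight_one] using hd
    simp [weight_bidegree_segreExp, hd]
  · rintro ⟨x, hx, rfl⟩
    obtain ⟨d, hd, rfl⟩ := exists_segreExp_eq e hx
    exact ⟨_, ⟨d, by simpa [Finsupp.degree_eq_weight_one] using hd, rfl⟩, segre_monomial e d 1⟩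

lemma finrank_bihomogeneous (a b : ℕ) :
    Module.finrank k (bihomogeneous k ρ κ (a, b)) =
      (Fintype.card ρ).multichoose a * (Fintype.card κ).multichoose b := by
  classical
  rw [bihomogeneous, weightedHomogeneousSubmodule_eq_finsupp_supported]
  refine (Module.finrank_eq_nat_card_basis
    (basisRestrictSupport k {d : ρ ⊕ κ →₀ ℕ | Finsupp.weight bidegree d = (a, b)})).trans ?_
  have := Finset.card_product (Finset.univ.finsuppAntidiag a : Finset (ρ →₀ ℕ))
    (Finset.univ.finsuppAntidiag b : Finset (κ →₀ ℕ))
  rw [Finset.card_finsuppAntidiag_nat_eq_multichoose,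
    Finset.card_finsuppAntidiag_nat_eq_multichoose, Finset.card_univ, Finset.card_univ] at this
  rw [← this, ← Nat.card_eq_finsetCard]
  refine Nat.card_congr (Finsupp.sumFinsuppEquivProdFinsupp.subtypeEquiv fun x => ?_)
  simp only [Set.mem_ofPred_eq, weight_bidegree, Prod.mk.injEq, Finset.mem_product,
    Finset.mem_finsuppAntidiag, Finset.subset_univ, and_true]
  rfl
end Segre

section Edge

/-- The indexing of the coordinates of `ℙ⁷` as the entries of a `2 × 4` matrix. -/
def edgeIndex : Fin 8 ≃ Fin 2 × Fin 4 :=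
  (finProdFinEquiv (m := 2) (n := 4)).symm

/-- The Segre map of `ℙ¹ × ℙ³ ⊂ ℙ⁷` on coordinate rings. -/
def edgeSegre : MvPolynomial (Fin 8) ℚ →ₐ[ℚ] MvPolynomial (Fin 2 ⊕ Fin 4) ℚ := segre edgeIndex

lemma edgeSegre_eq : edgeSegre = aeval
    ![X (.inl 0) * X (.inr 0), X (.inl 0) * X (.inr 1), X (.inl 0) * X (.inr 2),
      X (.inl 0) * X (.inr 3), X (.inl 1) * X (.inr 0), X (.inl 1) * X (.inr 1),
      X (.inl 1) * X (.inr 2), X (.inl 1) * X (.inr 3)] := by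
  refine MvPolynomial.algHom_ext fun i => ?_
  rw [edgeSegre, segre, aeval_X, aeval_X]
  fin_cases i <;> rfl

/-- The form of bidegree `(1, 2)` defining `E` in `ℙ¹ × ℙ³`. -/
def edgeForm : MvPolynomial (Fin 2 ⊕ Fin 4) ℚ :=
  X (.inl 0) * (X (.inr 0) ^ 2 + X (.inr 2) ^ 2 + X (.inr 3) ^ 2) +
    X (.inl 1) * (X (.inr 1) ^ 2 + X (.inr 1) * X (.inr 2) + X (.inr 0) * X (.inr 3))

lemma edgeForm_mem : edgeForm ∈ bihomogeneous ℚ (Fin 2) (Fin 4) (1, 2) := by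
  have hl : ∀ i, IsWeightedHomogeneous bidegree
      (X (.inl i) : MvPolynomial (Fin 2 ⊕ Fin 4) ℚ) (1, 0) :=
    fun i => isWeightedHomogeneous_X _ _ _
  have hr : ∀ i, IsWeightedHomogeneous bidegree
      (X (.inr i) : MvPolynomial (Fin 2 ⊕ Fin 4) ℚ) (0, 1) :=
    fun i => isWeightedHomogeneous_X _ _ _
  have hq : ∀ i j, IsWeightedHomogeneous bidegree
      (X (.inr i) * X (.inr j) : MvPolynomial (Fin 2 ⊕ Fin 4) ℚ) (0, 2) :=
    fun i j => (hr i).mul (hr j)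
  simp only [edgeForm, sq]
  exact ((hl 0).mul (((hq 0 0).add (hq 2 2)).add (hq 3 3))).add
    ((hl 1).mul (((hq 1 1).add (hq 1 2)).add (hq 0 3)))

lemma edgeForm_ne_zero : edgeForm ≠ 0 := fun h => by
  have := congrArg (eval fun _ => (1 : ℚ)) h
  norm_num [edgeForm] at this

lemma edgeSegre_edgeQuadrics_six : edgeSegre (edgeQuadrics 6) = X (.inl 0) * edgeForm := by
  simp [edgeSegre_eq, edgeQuadrics, edgeForm]
  ring

lemma edgeSegre_edgeQuadrics_seven : edgeSegre (edgeQuadrics 7) = X (.inl 1) * edgeForm := by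
  simp [edgeSegre_eq, edgeQuadrics, edgeForm]
  ring

lemma edgeQuadrics_mem (i : Fin 8) : edgeQuadrics i ∈ idealEdge :=
  Ideal.subset_span ⟨i, rfl⟩

lemma idealEdge_le_idealEdgeSat : idealEdge ≤ idealEdgeSat := fun _ hf =>
  Submodule.mem_iSup_of_mem 0 (Submodule.mem_colon.2 fun s _ => idealEdge.mul_mem_right s hf)

/-- Saturating does not leave an ideal modulo which some variable is a nonzerodivisor. -/
lemma idealEdgeSat_le {J : Ideal (MvPolynomial (Fin 8) ℚ)} (hJ : idealEdge ≤ J) (i : Fin 8)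
    (hi : ∀ f, f * X i ∈ J → f ∈ J) : idealEdgeSat ≤ J := by
  refine iSup_le fun t f hf => ?_
  have h : f * X i ^ t ∈ J :=
    hJ (Submodule.mem_colon.1 hf _ (Ideal.pow_mem_pow (Ideal.subset_span (Set.mem_range_self i)) t))
  clear hf
  induction t with
  | zero => simpa using h
  | succ t ih => exact ih (hi _ (by rwa [mul_assoc, ← pow_succ]))

lemma ker_edgeSegre_le : RingHom.ker edgeSegre ≤ idealEdge := by
  refine ker_segre_le edgeIndex fun i j => ?_
  have h : ∀ c c', X (edgeIndex.symm (0, c)) * X (edgeIndex.symm (1, c')) -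
      X (edgeIndex.symm (0, c')) * X (edgeIndex.symm (1, c)) ∈ idealEdge := fun c c' => by
    have h0 := edgeQuadrics_mem 0
    have h1 := edgeQuadrics_mem 1
    have h2 := edgeQuadrics_mem 2
    have h3 := edgeQuadrics_mem 3
    have h4 := edgeQuadrics_mem 4
    have h5 := edgeQuadrics_mem 5
    have hx : ∀ r c, edgeIndex.symm (r, c) =
        (![![0, 1, 2, 3], ![4, 5, 6, 7]] : Fin 2 → Fin 4 → Fin 8) r c := by decide
    simp only [edgeQuadrics, Matrix.cons_val, tP7] at h0 h1 h2 h3 h4 h5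
    simp only [hx]
    fin_cases c <;> fin_cases c' <;>
      simp only [Fin.mk_zero, Fin.mk_one, Fin.reduceFinMk, Fin.isValue, Matrix.cons_val] <;>
      first
      | (rw [sub_self]; exact idealEdge.zero_mem)
      | (convert h0 using 1; ring1)
      | (convert h1 using 1; ring1)
      | (convert h2 using 1; ring1)
      | (convert h3 using 1; ring1)
      | (convert h4 using 1; ring1)
      | (convert h5 using 1; ring1)
      | (convert idealEdge.neg_mem h0 using 1; ring1)
      | (convert idealEdge.neg_mem h1 using 1; ring1)
      | (convert idealEdge.neg_mem h2 using 1; ring1)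
      | (convert idealEdge.neg_mem h3 using 1; ring1)
      | (convert idealEdge.neg_mem h4 using 1; ring1)
      | (convert idealEdge.neg_mem h5 using 1; ring1)
  obtain ⟨⟨r, c⟩, rfl⟩ := edgeIndex.symm.surjective i
  obtain ⟨⟨r', c'⟩, rfl⟩ := edgeIndex.symm.surjective j
  simp only [Equiv.apply_symm_apply]
  obtain rfl | hr := eq_or_ne r r'
  · rw [mul_comm, sub_self]
    exact idealEdge.zero_mem
  · obtain ⟨rfl, rfl⟩ | ⟨rfl, rfl⟩ : r = 0 ∧ r' = 1 ∨ r = 1 ∧ r' = 0 := by omega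
    · exact h c c'
    · rw [mul_comm, mul_comm (X _) (X (edgeIndex.symm (0, c)))]
      exact h c' c

lemma edgeForm_dvd_of_dvd_mul {p g : MvPolynomial (Fin 2 ⊕ Fin 4) ℚ} (hp : Prime p)
    (hpF : ¬ p ∣ edgeForm) (h : edgeForm ∣ g * p) : edgeForm ∣ g := by
  obtain ⟨c, hc⟩ := h
  obtain ⟨d, rfl⟩ := (hp.dvd_or_dvd ⟨g, by rw [← hc, mul_comm]⟩).resolve_left hpF
  exact ⟨d, mul_right_cancel₀ hp.ne_zero (by rw [hc]; ring)⟩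

lemma idealEdgeSat_le_comap :
    idealEdgeSat ≤ (Ideal.span {edgeForm}).comap edgeSegre := by
  refine idealEdgeSat_le (Ideal.span_le.2 ?_) 7 fun f hf => ?_
  · rintro _ ⟨i, rfl⟩
    rw [SetLike.mem_coe, Ideal.mem_comap, Ideal.mem_span_singleton]
    fin_cases i
    on_goal 7 => exact edgeSegre_edgeQuadrics_six ▸ dvd_mul_left _ _
    on_goal 7 => exact edgeSegre_edgeQuadrics_seven ▸ dvd_mul_left _ _
    all_goals
      refine (dvd_zero _).trans (dvd_of_eq ?_)
      simp [edgeSegre_eq, edgeQuadrics]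
      ring
  · rw [Ideal.mem_comap, Ideal.mem_span_singleton] at hf ⊢
    have h7 : edgeSegre (X 7) = X (.inl 1) * X (.inr 3) := by simp [edgeSegre_eq]
    rw [map_mul, h7, ← mul_assoc] at hf
    refine edgeForm_dvd_of_dvd_mul (X_prime (i := Sum.inl 1)) ?_
      (edgeForm_dvd_of_dvd_mul (X_prime (i := Sum.inr 3)) ?_ hf)
    · rintro ⟨c, hc⟩
      have := congrArg (eval (Sum.elim ![1, 0] ![1, 0, 0, 0])) hc
      simp [edgeForm] at this
    · rintro ⟨c, hc⟩
      have := congrArg (eval (Sum.elim ![1, 0] ![1, 0, 0, 0])) hc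
      simp [edgeForm] at this

lemma finrank_map_add_finrank_inf_ker {k V W : Type*} [Field k] [AddCommGroup V] [Module k V]
    [AddCommGroup W] [Module k W] (f : V →ₗ[k] W) (p : Submodule k V) [FiniteDimensional k p] :
    Module.finrank k (p.map f) + Module.finrank k ↥(p ⊓ LinearMap.ker f) =
      Module.finrank k p := by
  rw [← LinearMap.finrank_range_add_finrank_ker (f.domRestrict p), LinearMap.range_domRestrict,
    LinearMap.ker_domRestrict, ← Submodule.map_comap_subtype,
    Submodule.finrank_map_subtype_eq]

lemma map_edgeSegre_inf_idealEdgeSat (n : ℕ) :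
    (homogeneousSubmodule (Fin 8) ℚ (n + 2) ⊓
      Submodule.restrictScalars ℚ idealEdgeSat).map edgeSegre.toLinearMap =
    (bihomogeneous ℚ (Fin 2) (Fin 4) (n + 1, n)).map (LinearMap.mulLeft ℚ edgeForm) := by
  apply le_antisymm
  · rintro _ ⟨f, ⟨hf, hfs⟩, rfl⟩
    have hf' : edgeSegre f ∈ bihomogeneous ℚ (Fin 2) (Fin 4) (n + 2, n + 2) := by
      rw [← map_segre_homogeneousSubmodule edgeIndex]
      exact ⟨f, hf, rfl⟩
    obtain ⟨g, hg⟩ := Ideal.mem_span_singleton.1 (idealEdgeSat_le_comap hfs)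
    let 𝒜 := weightedGradedAlgebra ℚ (bidegree (ρ := Fin 2) (κ := Fin 4))
    refine ⟨DirectSum.decompose (weightedHomogeneousSubmodule ℚ bidegree) g (n + 1, n),
      Subtype.coe_prop _, ?_⟩
    have h := DirectSum.coe_decompose_mul_of_left_mem_of_le (b := g) (n := (n + 2, n + 2))
      (weightedHomogeneousSubmodule ℚ bidegree) edgeForm_mem (by simp [Prod.le_def])
    change edgeSegre f = edgeForm * g at hg
    rw [← hg, DirectSum.decompose_of_mem_same _ hf'] at h
    exact h.symm
  · rw [Submodule.map_le_iff_le_comap, bihomogeneous,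
      weightedHomogeneousSubmodule_eq_finsupp_supported, AddMonoidAlgebra.supported_eq_span_single,
      Submodule.span_le]
    rintro _ ⟨x, hx, rfl⟩
    have hx : Finsupp.weight bidegree x = (n + 1, n) := hx
    have h := hx
    rw [weight_bidegree, Prod.mk.injEq] at h
    obtain ⟨r, -, hr⟩ := Finset.exists_ne_zero_of_sum_ne_zero (h.1.trans_ne n.succ_ne_zero)
    obtain ⟨y, rfl⟩ := exists_add_of_le (show Finsupp.single (Sum.inl r) 1 ≤ x by
      simpa [Nat.one_le_iff_ne_zero] using hr)
    obtain ⟨d, hd, rfl⟩ := exists_segreExp_eq edgeIndex (t := n) (x := y) (by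
      rw [map_add, Finsupp.weight_single, add_comm n] at hx
      have hx' : ((1, 0) : ℕ × ℕ) + Finsupp.weight bidegree y = (1, 0) + (n, n) := by
        simpa [bidegree] using hx
      exact add_left_cancel hx')
    obtain ⟨q, hq, hqr⟩ : ∃ q, (edgeQuadrics q).IsHomogeneous 2 ∧
        edgeSegre (edgeQuadrics q) = X (.inl r) * edgeForm := by
      have hX : ∀ i j, (X i * X j : MvPolynomial (Fin 8) ℚ).IsHomogeneous 2 := fun i j =>
        (isHomogeneous_X _ i).mul (isHomogeneous_X _ j)
      fin_cases r
      · refine ⟨6, ?_, edgeSegre_edgeQuadrics_six⟩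
        exact (((((sq (tP7 0) ▸ hX 0 0).add (sq (tP7 2) ▸ hX 2 2)).add
          (sq (tP7 3) ▸ hX 3 3)).add (hX 1 5)).add (hX 1 6)).add (hX 0 7)
      · refine ⟨7, ?_, edgeSegre_edgeQuadrics_seven⟩
        exact (((((hX 0 4).add (sq (tP7 5) ▸ hX 5 5)).add (hX 2 6)).add (hX 5 6)).add
          (hX 3 7)).add (hX 4 7)
    refine ⟨edgeQuadrics q * monomial d 1, ⟨?_, ?_⟩, ?_⟩
    · rw [SetLike.mem_coe, mem_homogeneousSubmodule, add_comm n]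
      exact hq.mul (isHomogeneous_monomial _ hd)
    · exact idealEdgeSat.mul_mem_right _ (idealEdge_le_idealEdgeSat (edgeQuadrics_mem q))
    · have : edgeSegre (monomial d 1) = monomial (segreExp edgeIndex d) 1 := segre_monomial _ _ _
      change edgeSegre _ = edgeForm * monomial _ 1
      rw [map_mul, hqr, this, monomial_single_add]
      ring

lemma finrank_sub_finrank_inf_idealEdgeSat (n : ℕ) :
    (Module.finrank ℚ ↥(homogeneousSubmodule (Fin 8) ℚ (n + 2)) : ℤ) -
      Module.finrank ℚ ↥(homogeneousSubmodule (Fin 8) ℚ (n + 2) ⊓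
        Submodule.restrictScalars ℚ idealEdgeSat) =
    (n + 3) * (n + 5).choose 3 - (n + 2) * (n + 3).choose 3 := by
  have : FiniteDimensional ℚ ↥(homogeneousSubmodule (Fin 8) ℚ (n + 2)) :=
    Module.Finite.iff_fg.2 (weightedHomogeneousSubmodule_fg _ _ (by simp) _)
  have : FiniteDimensional ℚ ↥(homogeneousSubmodule (Fin 8) ℚ (n + 2) ⊓
        Submodule.restrictScalars ℚ idealEdgeSat) :=
    Submodule.finiteDimensional_of_le inf_le_left
  have h₁ := finrank_map_add_finrank_inf_ker edgeSegre.toLinearMap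
    (homogeneousSubmodule (Fin 8) ℚ (n + 2))
  have h₂ := finrank_map_add_finrank_inf_ker edgeSegre.toLinearMap
    (homogeneousSubmodule (Fin 8) ℚ (n + 2) ⊓ Submodule.restrictScalars ℚ idealEdgeSat)
  have hker : LinearMap.ker edgeSegre.toLinearMap ≤ Submodule.restrictScalars ℚ idealEdgeSat :=
    ker_edgeSegre_le.trans idealEdge_le_idealEdgeSat
  rw [inf_assoc, inf_eq_right.2 hker, map_edgeSegre_inf_idealEdgeSat,
    LinearEquiv.finrank_eq (Submodule.equivMapOfInjective _
      (fun _ _ h => mul_left_cancel₀ edgeForm_ne_zero h) _).symm, finrank_bihomogeneous] at h₂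
  rw [edgeSegre, map_segre_homogeneousSubmodule, finrank_bihomogeneous, ← edgeSegre] at h₁
  rw [← h₁, ← h₂]
  have h₄ : ∀ m, Nat.multichoose 4 m = (m + 3).choose 3 := fun m => by
    rw [Nat.multichoose_eq, ← Nat.choose_symm_add]
    congr 1
    omega
  simp only [Fintype.card_fin, Nat.multichoose_two, h₄]
  push_cast
  ring

lemma exists_hilbertPolynomial_edge :
    ∃ Q : Polynomial ℚ, Q.natDegree = 3 ∧ Q.leadingCoeff * 6 = 7 ∧
      ∃ N : ℕ, ∀ t ≥ N,
        ((Module.finrank ℚ ↥(homogeneousSubmodule (Fin 8) ℚ t) : ℚ) -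
          (Module.finrank ℚ ↥(homogeneousSubmodule (Fin 8) ℚ t ⊓
            Submodule.restrictScalars ℚ idealEdgeSat) : ℚ)) = Q.eval (t : ℚ) := by
  let Q : Polynomial ℚ := .C (7 / 6) * .X ^ 3 + .C 3 * .X ^ 2 + .C (17 / 6) * .X + .C 1
  have hQ : Q.natDegree = 3 := by
    simp only [Q]
    compute_degree!
  refine ⟨Q, hQ, ?_, 2, fun t ht => ?_⟩
  · rw [Polynomial.leadingCoeff, hQ]
    simp [Q, Polynomial.coeff_one]
  · obtain ⟨n, rfl⟩ := exists_add_of_le ht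
    have h := congrArg (Int.cast : ℤ → ℚ) (finrank_sub_finrank_inf_idealEdgeSat n)
    have hc : ∀ m : ℕ, ((m + 3).choose 3 : ℚ) = (m + 1) * (m + 2) * (m + 3) / 6 := fun m => by
      have := Nat.descFactorial_eq_factorial_mul_choose (m + 3) 3
      have := congrArg (Nat.cast : ℕ → ℚ) this
      simp [Nat.descFactorial, Nat.factorial] at this
      linarith
    push_cast at h
    rw [add_comm 2 n, h, hc (n + 2), hc n]
    simp [Q]
    ring

/-- The parametrization `x ↦ (-B(x) : A(x)) × x` of `E ⊂ ℙ¹ × ℙ³`, evaluated at `v`. -/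
def edgeParam (v : Fin 4 → MvPolynomial (Fin 4) ℚ) :
    MvPolynomial (Fin 8) ℚ →ₐ[ℚ] MvPolynomial (Fin 4) ℚ :=
  aeval
    ![-(v 1 ^ 2 + v 1 * v 2 + v 0 * v 3) * v 0, -(v 1 ^ 2 + v 1 * v 2 + v 0 * v 3) * v 1,
      -(v 1 ^ 2 + v 1 * v 2 + v 0 * v 3) * v 2, -(v 1 ^ 2 + v 1 * v 2 + v 0 * v 3) * v 3,
      (v 0 ^ 2 + v 2 ^ 2 + v 3 ^ 2) * v 0, (v 0 ^ 2 + v 2 ^ 2 + v 3 ^ 2) * v 1,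
      (v 0 ^ 2 + v 2 ^ 2 + v 3 ^ 2) * v 2, (v 0 ^ 2 + v 2 ^ 2 + v 3 ^ 2) * v 3]

lemma aeval_comp_edgeParam (v w : Fin 4 → MvPolynomial (Fin 4) ℚ) :
    (aeval w).comp (edgeParam v) = edgeParam fun i => aeval w (v i) := by
  refine MvPolynomial.algHom_ext fun i => ?_
  rw [AlgHom.comp_apply, edgeParam, edgeParam, aeval_X, aeval_X]
  fin_cases i <;> simp

lemma idealEdgeSat_le_ker_edgeParam : idealEdgeSat ≤ RingHom.ker (edgeParam X) := by
  refine idealEdgeSat_le (Ideal.span_le.2 ?_) 7 fun f hf => ?_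
  · rintro _ ⟨i, rfl⟩
    rw [SetLike.mem_coe, RingHom.mem_ker]
    fin_cases i <;> simp [edgeParam, edgeQuadrics] <;> ring
  · rw [RingHom.mem_ker, map_mul] at hf
    refine (mul_eq_zero.1 hf).resolve_right fun h => ?_
    have := congrArg (eval fun _ => (1 : ℚ)) h
    simp [edgeParam] at this
    norm_num at this

/-- The kernel of a ring homomorphism to a domain, as a point of the prime spectrum. -/
def kerPoint {A B : Type*} [CommRing A] [CommRing B] [IsDomain B] (f : A →+* B) :
    PrimeSpectrum A :=
  ⟨RingHom.ker f, RingHom.ker_isPrime f⟩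

lemma kerPoint_lt_kerPoint {A B C : Type*} [CommRing A] [CommRing B] [IsDomain B] [CommRing C]
    [IsDomain C] {f : A →+* B} {f' : A →+* C} (g : B →+* C) (h : g.comp f = f') (x : A)
    (hx : f' x = 0) (hx' : f x ≠ 0) : kerPoint f < kerPoint f' := by
  refine lt_of_le_of_ne (fun y (hy : f y = 0) => ?_) fun h' => hx' ?_
  · change f' y = 0
    rw [← h, RingHom.comp_apply, hy, map_zero]
  · have : x ∈ (kerPoint f').asIdeal := hx
    rwa [← h'] at this

/-- A chain of irreducible subvarieties of the affine cone over `E`. -/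
def edgeChain : Fin 5 → PrimeSpectrum (MvPolynomial (Fin 8) ℚ) :=
  ![kerPoint (edgeParam X).toRingHom, kerPoint (edgeParam ![0, X 1, X 2, X 3]).toRingHom,
    kerPoint (edgeParam ![0, 0, X 2, X 3]).toRingHom,
    kerPoint (edgeParam ![0, 0, 0, X 3]).toRingHom, kerPoint (edgeParam 0).toRingHom]

lemma edgeChain_strictMono : StrictMono edgeChain := by
  have key : ∀ (v v' w : Fin 4 → MvPolynomial (Fin 4) ℚ) (i : Fin 8) (a : Fin 4 → ℚ),
      (∀ i, aeval w (v i) = v' i) → edgeParam v' (X i) = 0 →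
      eval a (edgeParam v (X i)) ≠ 0 →
      kerPoint (edgeParam v).toRingHom < kerPoint (edgeParam v').toRingHom := by
    intro v v' w i a hw h h'
    refine kerPoint_lt_kerPoint (aeval w).toRingHom ?_ (X i) h fun h₀ => h' ?_
    · have := aeval_comp_edgeParam v w
      rw [funext hw] at this
      exact congrArg AlgHom.toRingHom this
    · change edgeParam v (X i) = 0 at h₀
      rw [h₀, map_zero]
  refine Fin.strictMono_iff_lt_succ.2 fun i => ?_
  fin_cases i
  · exact key _ _ ![0, X 1, X 2, X 3] 4 (fun _ => 1) (fun i => by fin_cases i <;> simp)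
      (by simp [edgeParam]) (by simp [edgeParam]; norm_num)
  · exact key _ _ ![0, 0, X 2, X 3] 5 (fun _ => 1) (fun i => by fin_cases i <;> simp)
      (by simp [edgeParam]) (by simp [edgeParam])
  · exact key _ _ ![0, 0, 0, X 3] 6 (fun _ => 1) (fun i => by fin_cases i <;> simp)
      (by simp [edgeParam]) (by simp [edgeParam])
  · exact key _ _ 0 7 (fun _ => 1) (fun i => by fin_cases i <;> simp)
      (by simp [edgeParam]) (by simp [edgeParam])

/-- The locus where the first two columns of the `2 × 4` matrix are proportional. -/
def segreTwoColumns : MvPolynomial (Fin 8) ℚ →ₐ[ℚ] MvPolynomial (Fin 10) ℚ :=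
  aeval ![X 8 * X 0, X 8 * X 1, X 2, X 3, X 9 * X 0, X 9 * X 1, X 6, X 7]

/-- The locus where the first three columns of the `2 × 4` matrix are proportional. -/
def segreThreeColumns : MvPolynomial (Fin 8) ℚ →ₐ[ℚ] MvPolynomial (Fin 10) ℚ :=
  aeval ![X 8 * X 0, X 8 * X 1, X 8 * X 2, X 3, X 9 * X 0, X 9 * X 1, X 9 * X 2, X 7]

lemma kerPoint_id_lt_segreTwoColumns :
    kerPoint (RingHom.id (MvPolynomial (Fin 8) ℚ)) < kerPoint segreTwoColumns.toRingHom := by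
  refine kerPoint_lt_kerPoint segreTwoColumns.toRingHom rfl (X 0 * X 5 - X 1 * X 4) ?_ fun h => ?_
  · change segreTwoColumns _ = 0
    simp [segreTwoColumns]
    ring
  · have := congrArg (eval ![1, 0, 0, 0, 0, 1, 0, 0]) h
    simp at this

lemma segreTwoColumns_lt_segreThreeColumns :
    kerPoint segreTwoColumns.toRingHom < kerPoint segreThreeColumns.toRingHom := by
  let g : MvPolynomial (Fin 10) ℚ →ₐ[ℚ] MvPolynomial (Fin 10) ℚ :=
    aeval ![X 0, X 1, X 8 * X 2, X 3, X 4, X 5, X 9 * X 2, X 7, X 8, X 9]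
  have hg : g.comp segreTwoColumns = segreThreeColumns := by
    refine MvPolynomial.algHom_ext fun i => ?_
    rw [AlgHom.comp_apply, segreTwoColumns, segreThreeColumns, aeval_X, aeval_X]
    fin_cases i <;> simp [g]
  refine kerPoint_lt_kerPoint g.toRingHom (congrArg AlgHom.toRingHom hg) (X 0 * X 6 - X 2 * X 4)
    ?_ fun h => ?_
  · change segreThreeColumns _ = 0
    simp [segreThreeColumns]
    ring
  · change segreTwoColumns _ = 0 at h
    have := congrArg (eval ![1, 0, 0, 0, 0, 0, 1, 0, 1, 0]) h
    simp [segreTwoColumns] at this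

lemma segreThreeColumns_lt_edgeSegre :
    kerPoint segreThreeColumns.toRingHom < kerPoint edgeSegre.toRingHom := by
  let g : MvPolynomial (Fin 10) ℚ →ₐ[ℚ] MvPolynomial (Fin 2 ⊕ Fin 4) ℚ :=
    aeval ![X (.inr 0), X (.inr 1), X (.inr 2), X (.inl 0) * X (.inr 3), 0, 0, 0,
      X (.inl 1) * X (.inr 3), X (.inl 0), X (.inl 1)]
  have hg : g.comp segreThreeColumns = edgeSegre := by
    refine MvPolynomial.algHom_ext fun i => ?_
    rw [AlgHom.comp_apply, segreThreeColumns, edgeSegre_eq, aeval_X, aeval_X]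
    fin_cases i <;> simp [g]
  refine kerPoint_lt_kerPoint g.toRingHom (congrArg AlgHom.toRingHom hg) (X 0 * X 7 - X 3 * X 4)
    ?_ fun h => ?_
  · change edgeSegre _ = 0
    simp [edgeSegre_eq]
    ring
  · change segreThreeColumns _ = 0 at h
    have := congrArg (eval ![1, 0, 0, 0, 0, 0, 0, 1, 1, 0]) h
    simp [segreThreeColumns] at this

lemma kerPoint_edgeSegre_lt {p : PrimeSpectrum (MvPolynomial (Fin 8) ℚ)}
    (hp : idealEdgeSat ≤ p.asIdeal) : kerPoint edgeSegre.toRingHom < p := by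
  have hle := ker_edgeSegre_le.trans (idealEdge_le_idealEdgeSat.trans hp)
  refine lt_of_le_of_ne hle fun h => ?_
  have h6 : edgeQuadrics 6 ∈ p.asIdeal := hp (idealEdge_le_idealEdgeSat (edgeQuadrics_mem 6))
  rw [← h] at h6
  change edgeSegre _ = 0 at h6
  rw [edgeSegre_edgeQuadrics_six] at h6
  exact mul_ne_zero (X_ne_zero _) edgeForm_ne_zero h6

lemma ringKrullDim_edge :
    ringKrullDim (MvPolynomial (Fin 8) ℚ ⧸ idealEdgeSat) = (4 : ℕ) := by
  rw [ringKrullDim_quotient]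
  apply le_antisymm
  · refine iSup_le fun l => ?_
    have hl : idealEdgeSat ≤ l.head.1.asIdeal := l.head.2
    let l' : LTSeries (PrimeSpectrum (MvPolynomial (Fin 8) ℚ)) :=
      ((((l.map Subtype.val fun _ _ h => h).cons _ (kerPoint_edgeSegre_lt hl)).cons _
        segreThreeColumns_lt_edgeSegre).cons _ segreTwoColumns_lt_segreThreeColumns).cons _
        kerPoint_id_lt_segreTwoColumns
    have h : (l'.length : WithBot ℕ∞) ≤ ringKrullDim (MvPolynomial (Fin 8) ℚ) :=
      Order.LTSeries.length_le_krullDim l'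
    have hlen : l'.length = l.length + 4 := by
      simp [l']
      rfl
    rw [MvPolynomial.ringKrullDim_of_isNoetherianRing, ringKrullDim_eq_zero_of_field, zero_add,
      hlen, Nat.card_fin] at h
    have h : l.length + 4 ≤ 8 := by exact_mod_cast h
    exact_mod_cast (by omega : l.length ≤ 4)
  · have h : ∀ i, edgeChain i ∈ PrimeSpectrum.zeroLocus (idealEdgeSat : Set _) := fun i =>
      idealEdgeSat_le_ker_edgeParam.trans (edgeChain_strictMono.monotone (Fin.zero_le i))
    exact Order.LTSeries.length_le_krullDim (LTSeries.mk 4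
      (fun i => (⟨edgeChain i, h i⟩ : PrimeSpectrum.zeroLocus (idealEdgeSat : Set _)))
      fun _ _ hij => edgeChain_strictMono hij)

end Edge

/-- The 8 listed quadrics define a projective scheme `E ⊂ ℙ⁷` of dimension `3` (its
affine cone has Krull dimension `4`) and degree `7` (its Hilbert polynomial has degree
`3` and leading coefficient `7/3!`). -/
theorem edge_variety_dim_three_deg_seven :
    ringKrullDim (MvPolynomial (Fin 8) ℚ ⧸ idealEdgeSat) = (4 : ℕ) ∧
    ∃ Q : Polynomial ℚ, Q.natDegree = 3 ∧ Q.leadingCoeff * 6 = 7 ∧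
      ∃ N : ℕ, ∀ t ≥ N,
        ((Module.finrank ℚ ↥(homogeneousSubmodule (Fin 8) ℚ t) : ℚ) -
          (Module.finrank ℚ ↥(homogeneousSubmodule (Fin 8) ℚ t ⊓
            Submodule.restrictScalars ℚ idealEdgeSat) : ℚ)) = Q.eval (t : ℚ) := by
  exact ⟨ringKrullDim_edge, exists_hilbertPolynomial_edge⟩

end
end

section
/- The base locus of the Cremona transformation of P^20 defined by the 21 quadrics in equation (3) is a projective scheme of dimension 12 and degree 33 with Hilbert polynomial P(t) = C(t+8,8) − 12·C(t+9,9) + 45·C(t+10,10) − 66·C(t+11,11) + 33·C(t+12,12). -/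
open MvPolynomial

noncomputable section

/-- Coordinates `x₀, …, x₂₀` on `ℙ²⁰`. -/
abbrev y : Fin 21 → MvPolynomial (Fin 21) ℚ := X

/-- The 21 quadrics of equation (3), defining the Cremona map `ω : ℙ²⁰ ⇢ ℙ²⁰`. -/
def omegaP20 : Fin 21 → MvPolynomial (Fin 21) ℚ :=
  ![y 10 * y 15 - y 9 * y 16 + y 6 * y 20,
    y 10 * y 14 - y 8 * y 16 + y 5 * y 20,
    y 9 * y 14 - y 8 * y 15 + y 4 * y 20,
    y 6 * y 14 - y 5 * y 15 + y 4 * y 16,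
    y 11 * y 13 - y 16 * y 17 + y 15 * y 18 - y 14 * y 19 + y 12 * y 20,
    y 3 * y 13 - y 10 * y 17 + y 9 * y 18 - y 8 * y 19 + y 7 * y 20,
    y 10 * y 12 - y 2 * y 13 - y 7 * y 16 - y 6 * y 18 + y 5 * y 19,
    y 9 * y 12 - y 1 * y 13 - y 7 * y 15 - y 6 * y 17 + y 4 * y 19,
    y 8 * y 12 - y 0 * y 13 - y 7 * y 14 - y 5 * y 17 + y 4 * y 18,
    y 10 * y 11 - y 3 * y 16 + y 2 * y 20,
    y 9 * y 11 - y 3 * y 15 + y 1 * y 20,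
    y 8 * y 11 - y 3 * y 14 + y 0 * y 20,
    y 7 * y 11 - y 3 * y 12 + y 2 * y 17 - y 1 * y 18 + y 0 * y 19,
    y 6 * y 11 - y 2 * y 15 + y 1 * y 16,
    y 5 * y 11 - y 2 * y 14 + y 0 * y 16,
    y 4 * y 11 - y 1 * y 14 + y 0 * y 15,
    y 6 * y 8 - y 5 * y 9 + y 4 * y 10,
    y 3 * y 6 - y 2 * y 9 + y 1 * y 10,
    y 3 * y 5 - y 2 * y 8 + y 0 * y 10,
    y 3 * y 4 - y 1 * y 8 + y 0 * y 9,
    y 2 * y 4 - y 1 * y 5 + y 0 * y 6]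

/-- The ideal generated by the 21 quadrics of equation (3). -/
def idealOmegaP20 : Ideal (MvPolynomial (Fin 21) ℚ) := Ideal.span (Set.range omegaP20)

/-- Its saturation with respect to the irrelevant maximal ideal. -/
def idealOmegaP20Sat : Ideal (MvPolynomial (Fin 21) ℚ) :=
  ⨆ t : ℕ, idealOmegaP20.colon
    ((Ideal.span (Set.range (X : Fin 21 → MvPolynomial (Fin 21) ℚ)) ^ t :
      Ideal (MvPolynomial (Fin 21) ℚ)) : Submodule _ _)

section KrullDimension

theorem ringKrullDim_eq_of_isIntegral {A B : Type*} [CommRing A] [CommRing B] [Algebra A B]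
    [Algebra.IsIntegral A B] (h : Function.Injective (algebraMap A B)) :
    ringKrullDim B = ringKrullDim A := by
  refine le_antisymm (Order.krullDim_le_of_strictMono (PrimeSpectrum.comap (algebraMap A B))
    fun P Q hPQ => Ideal.IsIntegral.comap_lt_comap hPQ) (iSup_le fun l => ?_)
  have : FaithfulSMul A B := (faithfulSMul_iff_algebraMap_injective A B).mpr h
  obtain ⟨P, hP, hPl⟩ := Ideal.nonempty_primesOver (S := B) l.head.asIdeal
  obtain ⟨L, hL, -⟩ := Ideal.exists_ltSeries_of_hasGoingUp l P
  exact hL ▸ Order.LTSeries.length_le_krullDim L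

variable {K R : Type} [Field K] [CommRing R] [Algebra K R]

theorem ringKrullDim_eq_of_isIntegral_mvPolynomial {s : ℕ} (g : MvPolynomial (Fin s) K →ₐ[K] R)
    (hg : Function.Injective g) (hgi : g.IsIntegral) : ringKrullDim R = s := by
  algebraize [g.toRingHom]
  have : Algebra.IsIntegral (MvPolynomial (Fin s) K) R := ⟨hgi⟩
  rw [ringKrullDim_eq_of_isIntegral (A := MvPolynomial (Fin s) K) (B := R) hg]
  simp

/-- A polynomial subalgebra stays a polynomial subalgebra in some quotient that is a domain. -/
theorem exists_isDomain_injective_comp {ι : Type} (f : MvPolynomial ι K →ₐ[K] R)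
    (hf : Function.Injective f) : ∃ (D : Type) (_ : CommRing D) (_ : IsDomain D) (_ : Algebra K D)
      (π : R →ₐ[K] D), Function.Surjective π ∧ Function.Injective (π.comp f) := by
  obtain ⟨P, hP, hPc⟩ := Ideal.exists_comap_eq_of_mem_minimalPrimes_of_injective
    (f := f.toRingHom) hf ⊥ (by simp [IsDomain.minimalPrimes_eq_singleton_bot])
  refine ⟨R ⧸ P, inferInstance, inferInstance, inferInstance, Ideal.Quotient.mkₐ K P,
    Ideal.Quotient.mkₐ_surjective K P, (injective_iff_map_eq_zero _).mpr fun p hp => ?_⟩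
  have : p ∈ P.comap f.toRingHom := (Ideal.Quotient.eq_zero_iff_mem (I := P)).mp hp
  rwa [hPc] at this

theorem isAlgebraic_adjoin_range_of_isIntegral {D : Type} [CommRing D] [IsDomain D] [Algebra K D]
    {s : ℕ} {g : MvPolynomial (Fin s) K →ₐ[K] R} (hg : g.IsIntegral) {π : R →ₐ[K] D}
    (hπ : Function.Surjective π) :
    Algebra.IsAlgebraic (Algebra.adjoin K (Set.range fun i => π (g (X i)))) D := by
  have hmem : ∀ p, π.comp g p ∈ Algebra.adjoin K (Set.range fun i => π (g (X i))) := fun p => by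
    rw [Algebra.adjoin_range_eq_range_aeval, aeval_unique (π.comp g)]
    exact ⟨p, rfl⟩
  have hint : (π.comp g).toRingHom.IsIntegral :=
    hg.trans _ _ (RingHom.isIntegral_of_surjective _ hπ)
  have : Algebra.IsIntegral (Algebra.adjoin K (Set.range fun i => π (g (X i)))) D :=
    ⟨RingHom.IsIntegral.tower_top ((π.comp g).codRestrict _ hmem).toRingHom _ hint⟩
  exact Algebra.IsIntegral.isAlgebraic

/-- In a finitely generated algebra over a field, algebraically independent families have at most
as many members as the Krull dimension. -/
theorem AlgebraicIndependent.natCard_le_ringKrullDim [Algebra.FiniteType K R] {ι : Type} [Finite ι]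
    {x : ι → R} (hx : AlgebraicIndependent K x) : (Nat.card ι : WithBot ℕ∞) ≤ ringKrullDim R := by
  have : Nontrivial R := hx.algebraMap_injective.nontrivial
  obtain ⟨s, g, hg, hgi⟩ := exists_integral_inj_algHom_of_fg K R
  obtain ⟨D, _, _, _, π, hπ, hπx⟩ := exists_isDomain_injective_comp (aeval x) hx
  have hind : AlgebraicIndependent K fun i => π (x i) := by
    rw [AlgebraicIndependent]
    convert hπx
    ext; simp
  have := isAlgebraic_adjoin_range_of_isIntegral hgi hπ
  have h := hind.cardinalMk_le_trdeg.trans ((Algebra.IsAlgebraic.trdeg_le_cardinalMk K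
    (Set.range fun i => π (g (X i)))).trans Cardinal.mk_range_le)
  rw [ringKrullDim_eq_of_isIntegral_mvPolynomial g hg hgi]
  have := Fintype.ofFinite ι
  simp only [Cardinal.mk_fintype, Fintype.card_fin, Nat.cast_le] at h
  simpa using h

/-- A finite generating family of an algebra over a field contains an algebraically independent
subfamily with as many members as the Krull dimension. -/
theorem exists_algebraicIndependent_of_adjoin_eq_top [Nontrivial R] {ι : Type} [Finite ι]
    {x : ι → R} (hx : Algebra.adjoin K (Set.range x) = ⊤) :
    ∃ (s : ℕ) (u : Fin s → ι), ringKrullDim R = s ∧ AlgebraicIndependent K (x ∘ u) := by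
  have : Algebra.FiniteType K R := ⟨Subalgebra.fg_def.mpr ⟨_, Set.finite_range x, hx⟩⟩
  obtain ⟨s, g, hg, hgi⟩ := exists_integral_inj_algHom_of_fg K R
  obtain ⟨D, _, _, _, π, hπ, hπg⟩ := exists_isDomain_injective_comp g hg
  have hind : AlgebraicIndependent K fun i => π (g (X i)) := by
    rw [AlgebraicIndependent]
    convert hπg
    ext; simp
  have := isAlgebraic_adjoin_range_of_isIntegral hgi hπ
  have hbasis : IsTranscendenceBasis K fun i => π (g (X i)) :=
    hind.isTranscendenceBasis_iff_isAlgebraic.mpr this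
  have htop : Algebra.adjoin K (Set.range fun i => π (x i)) = ⊤ := by
    rw [Set.range_comp', ← AlgHom.map_adjoin, hx, Algebra.map_top]
    exact (AlgHom.range_eq_top π).mpr hπ
  have : Algebra.IsAlgebraic (Algebra.adjoin K (Set.range fun i => π (x i))) D :=
    ⟨fun d => isAlgebraic_algebraMap
      (⟨d, htop ▸ Algebra.mem_top⟩ : Algebra.adjoin K (Set.range fun i => π (x i)))⟩
  obtain ⟨t, ht, htb⟩ := exists_isTranscendenceBasis_subset (R := K)
    (Set.range fun i => π (x i))
  obtain ⟨e⟩ := Cardinal.eq.mp (htb.cardinalMk_eq hbasis)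
  choose v hv using fun i => ht (e.symm i).2
  refine ⟨s, v, ringKrullDim_eq_of_isIntegral_mvPolynomial g hg hgi,
    AlgebraicIndependent.of_comp π ?_⟩
  convert htb.1.comp e.symm e.symm.injective using 1
  ext i
  exact hv i

end KrullDimension

theorem finite_homogeneousSubmodule (σ K : Type*) [Finite σ] [Field K] (t : ℕ) :
    Module.Finite K (homogeneousSubmodule σ K t) := by
  have := (Finsupp.finite_of_degree_eq (σ := σ) t).to_subtype
  rw [homogeneousSubmodule_eq_finsupp_supported]
  exact Module.Finite.of_basis (basisRestrictSupport K _)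

section Groebner

variable {σ ι K : Type*} [Field K] {w : (σ →₀ ℕ) →+ ℕ} {ℓ : ι → σ →₀ ℕ}
  {g : ι → MvPolynomial σ K}

/-- The span of the monomial multiples of the `g k` whose leading monomial has weight below `n`. -/
def multiplesBelow (w : (σ →₀ ℕ) →+ ℕ) (ℓ : ι → σ →₀ ℕ) (g : ι → MvPolynomial σ K) (n : ℕ) :
    Submodule K (MvPolynomial σ K) :=
  Submodule.span K {f | ∃ u k, w (u + ℓ k) < n ∧ f = monomial u 1 * g k}

/-- The monomials divisible by no leading monomial `ℓ i`. -/
def standardMonomials (ℓ : ι → σ →₀ ℕ) : Set (σ →₀ ℕ) := {m | ∀ i, ¬ ℓ i ≤ m}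

/-- Buchberger's criterion for the polynomials `g i`, with leading monomials `ℓ i` selected by
the weight `w`. -/
structure IsGroebnerBasis (w : (σ →₀ ℕ) →+ ℕ) (ℓ : ι → σ →₀ ℕ) (g : ι → MvPolynomial σ K) :
    Prop where
  tail_mem : ∀ i, g i - monomial (ℓ i) 1 ∈ restrictSupport K {m | w m < w (ℓ i)}
  sPolynomial_mem : ∀ i j m, ℓ i ≤ m → ℓ j ≤ m →
    monomial (m - ℓ i) 1 * g i - monomial (m - ℓ j) 1 * g j ∈ multiplesBelow w ℓ g (w m)

theorem multiplesBelow_mono {n n' : ℕ} (h : n ≤ n') :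
    multiplesBelow w ℓ g n ≤ multiplesBelow w ℓ g n' :=
  Submodule.span_mono fun _ ⟨u, k, hu, hf⟩ => ⟨u, k, hu.trans_le h, hf⟩

theorem monomial_mul_mem_multiplesBelow {u : σ →₀ ℕ} {k : ι} {n : ℕ} (c : K)
    (h : w (u + ℓ k) < n) : monomial u c * g k ∈ multiplesBelow w ℓ g n := by
  have : monomial u c * g k = c • (monomial u 1 * g k) := by
    rw [← smul_mul_assoc, smul_monomial, smul_eq_mul, mul_one]
  exact this ▸ Submodule.smul_mem _ _ (Submodule.subset_span ⟨u, k, h, rfl⟩)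

theorem monomial_mul_mem_multiplesBelow_add {f : MvPolynomial σ K} {n : ℕ} (u : σ →₀ ℕ) (c : K)
    (hf : f ∈ multiplesBelow w ℓ g n) :
    monomial u c * f ∈ multiplesBelow w ℓ g (w u + n) := by
  induction hf using Submodule.span_induction with
  | mem f hf =>
    obtain ⟨v, k, hv, rfl⟩ := hf
    rw [← mul_assoc, monomial_mul]
    exact monomial_mul_mem_multiplesBelow _ (by rw [add_assoc, map_add]; omega)
  | zero => simp
  | add f f' _ _ hf hf' => rw [mul_add]; exact add_mem hf hf'
  | smul a f _ hf => rw [mul_smul_comm]; exact Submodule.smul_mem _ _ hf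

theorem mul_mem_multiplesBelow {p : MvPolynomial σ K} {n : ℕ}
    (hp : p ∈ restrictSupport K {m | w m < n}) (k : ι) :
    p * g k ∈ multiplesBelow w ℓ g (n + w (ℓ k)) := by
  rw [p.as_sum, Finset.sum_mul]
  refine Submodule.sum_mem _ fun m hm => monomial_mul_mem_multiplesBelow _ ?_
  have := (mem_restrictSupport_iff K).mp hp hm
  simp only [Set.mem_ofPred_eq] at this
  rw [map_add]
  omega

/-- An S-polynomial needs to be reduced only at the least common multiple `u + ℓ i = v + ℓ j`. -/
theorem sPolynomial_mem_of_lcm {i j : ι} {u v m : σ →₀ ℕ} (huv : u + ℓ i = v + ℓ j)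
    (hdisj : ∀ x, u x = 0 ∨ v x = 0)
    (h : monomial u 1 * g i - monomial v 1 * g j ∈ multiplesBelow w ℓ g (w (u + ℓ i)))
    (hi : ℓ i ≤ m) (hj : ℓ j ≤ m) :
    monomial (m - ℓ i) 1 * g i - monomial (m - ℓ j) 1 * g j ∈ multiplesBelow w ℓ g (w m) := by
  have hle : u + ℓ i ≤ m := fun x => by
    have hx := DFunLike.congr_fun huv x
    have hxi := hi x
    have hxj := hj x
    rw [Finsupp.add_apply] at hx ⊢
    rw [Finsupp.add_apply] at hx
    have := hdisj x
    omega
  obtain ⟨t, rfl⟩ := le_iff_exists_add'.mp hle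
  have hti : t + (u + ℓ i) - ℓ i = t + u := by rw [← add_assoc, add_tsub_cancel_right]
  have htj : t + (u + ℓ i) - ℓ j = t + v := by
    rw [huv, ← add_assoc, add_tsub_cancel_right]
  have hmul := monomial_mul_mem_multiplesBelow_add t 1 h
  rw [← map_add, mul_sub, ← mul_assoc, ← mul_assoc, monomial_mul, monomial_mul, one_mul] at hmul
  rwa [hti, htj]

theorem sPolynomial_mem_of_coprime {i j : ι} (hdisj : ∀ x, ℓ i x = 0 ∨ ℓ j x = 0)
    (hi : g i - monomial (ℓ i) 1 ∈ restrictSupport K {m | w m < w (ℓ i)})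
    (hj : g j - monomial (ℓ j) 1 ∈ restrictSupport K {m | w m < w (ℓ j)})
    {m : σ →₀ ℕ} (hmi : ℓ i ≤ m) (hmj : ℓ j ≤ m) :
    monomial (m - ℓ i) 1 * g i - monomial (m - ℓ j) 1 * g j ∈ multiplesBelow w ℓ g (w m) := by
  refine sPolynomial_mem_of_lcm (add_comm _ _) (fun x => (hdisj x).symm) ?_ hmi hmj
  have heq : monomial (ℓ j) 1 * g i - monomial (ℓ i) 1 * g j =
      (g i - monomial (ℓ i) 1) * g j - (g j - monomial (ℓ j) 1) * g i := by ring
  rw [heq, map_add]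
  refine sub_mem ?_ (mul_mem_multiplesBelow hj i)
  rw [add_comm]
  exact mul_mem_multiplesBelow hi j

theorem exists_mem_multiplesBelow {f : MvPolynomial σ K} (hf : f ∈ Ideal.span (Set.range g)) :
    ∃ n, f ∈ multiplesBelow w ℓ g n := by
  have hadd : ∀ {f f' : MvPolynomial σ K}, (∃ n, f ∈ multiplesBelow w ℓ g n) →
      (∃ n, f' ∈ multiplesBelow w ℓ g n) → ∃ n, f + f' ∈ multiplesBelow w ℓ g n :=
    fun ⟨n, hn⟩ ⟨n', hn'⟩ => ⟨max n n', add_mem (multiplesBelow_mono (le_max_left _ _) hn)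
      (multiplesBelow_mono (le_max_right _ _) hn')⟩
  induction hf using Submodule.span_induction with
  | mem f hf =>
    obtain ⟨k, rfl⟩ := hf
    exact ⟨w (0 + ℓ k) + 1, by
      simpa using monomial_mul_mem_multiplesBelow (u := 0) (1 : K) (Nat.lt_succ_self _)⟩
  | zero => exact ⟨0, zero_mem _⟩
  | add f f' _ _ hf hf' => exact hadd hf hf'
  | smul a f _ hf =>
    obtain ⟨n, hn⟩ := hf
    induction a using MvPolynomial.induction_on' with
    | monomial u c => exact ⟨_, monomial_mul_mem_multiplesBelow_add u c hn⟩
    | add p q hp hq => rw [add_smul]; exact hadd hp hq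

namespace IsGroebnerBasis

theorem monomial_mul_sub_mem (h : IsGroebnerBasis w ℓ g) (u : σ →₀ ℕ) (i : ι) :
    monomial u 1 * g i - monomial (u + ℓ i) 1 ∈ restrictSupport K {m | w m < w (u + ℓ i)} := by
  have h1 : monomial u 1 * g i - monomial (u + ℓ i) 1 =
      monomial u 1 * (g i - monomial (ℓ i) 1) := by
    rw [mul_sub, monomial_mul, one_mul]
  rw [h1, mem_restrictSupport_iff]
  intro m hm
  classical
  obtain ⟨a, ha, b, hb, rfl⟩ := Finset.mem_add.mp (support_mul _ _ hm)
  have hb' := (mem_restrictSupport_iff K).mp (h.tail_mem i) hb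
  obtain rfl : a = u := Finset.mem_singleton.mp (support_monomial_subset ha)
  simp only [Set.mem_ofPred_eq, map_add] at hb' ⊢
  omega

theorem multiplesBelow_le_restrictSupport (h : IsGroebnerBasis w ℓ g) (n : ℕ) :
    multiplesBelow w ℓ g n ≤ restrictSupport K {m | w m < n} := by
  refine Submodule.span_le.mpr ?_
  rintro _ ⟨u, k, hu, rfl⟩
  rw [← sub_add_cancel (monomial u 1 * g k) (monomial (u + ℓ k) 1)]
  exact add_mem (restrictSupport_mono K (fun m hm => lt_trans hm hu) (h.monomial_mul_sub_mem u k))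
    ((monomial_mem_restrictSupport K).mpr (Or.inl hu))

open Classical in
/-- The linear map sending a nonstandard monomial of weight `n` to a multiple of some `g i` with
that leading monomial, and all other monomials to zero. -/
def topPart (ℓ : ι → σ →₀ ℕ) (g : ι → MvPolynomial σ K) (w : (σ →₀ ℕ) →+ ℕ) (n : ℕ) :
    MvPolynomial σ K →ₗ[K] MvPolynomial σ K :=
  (basisMonomials σ K).constr K fun m =>
    if h : w m = n ∧ ∃ i, ℓ i ≤ m then monomial (m - ℓ h.2.choose) 1 * g h.2.choose else 0

open Classical in
theorem topPart_monomial {n : ℕ} (m : σ →₀ ℕ) : topPart ℓ g w n (monomial m 1) =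
    if h : w m = n ∧ ∃ i, ℓ i ≤ m then monomial (m - ℓ h.2.choose) 1 * g h.2.choose else 0 := by
  have := (basisMonomials σ K).constr_basis K (fun m => if h : w m = n ∧ ∃ i, ℓ i ≤ m then
    monomial (m - ℓ h.2.choose) 1 * g h.2.choose else 0) m
  rwa [coe_basisMonomials] at this

theorem topPart_eq_zero {n : ℕ} {f : MvPolynomial σ K} {s : Set (σ →₀ ℕ)}
    (hs : ∀ m ∈ s, ¬ (w m = n ∧ ∃ i, ℓ i ≤ m)) (hf : f ∈ restrictSupport K s) :
    topPart ℓ g w n f = 0 := by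
  rw [restrictSupport_eq_span] at hf
  induction hf using Submodule.span_induction with
  | mem f hf =>
    obtain ⟨m, hm, rfl⟩ := hf
    exact (topPart_monomial m).trans (dif_neg (hs m hm))
  | zero => simp
  | add f f' _ _ hf hf' => rw [map_add, hf, hf', add_zero]
  | smul a f _ hf => rw [map_smul, hf, smul_zero]

theorem sub_topPart_mem (h : IsGroebnerBasis w ℓ g) {n : ℕ} {f : MvPolynomial σ K}
    (hf : f ∈ multiplesBelow w ℓ g (n + 1)) : f - topPart ℓ g w n f ∈ multiplesBelow w ℓ g n := by
  induction hf using Submodule.span_induction with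
  | mem f hf =>
    obtain ⟨u, k, hu, rfl⟩ := hf
    rcases Nat.lt_succ_iff_lt_or_eq.mp hu with hu | hu
    · have hmem := monomial_mul_mem_multiplesBelow (g := g) 1 hu
      rw [topPart_eq_zero (fun m hm hm' => hm.ne hm'.1)
        (h.multiplesBelow_le_restrictSupport n hmem), sub_zero]
      exact hmem
    · have hex : w (u + ℓ k) = n ∧ ∃ i, ℓ i ≤ u + ℓ k := ⟨hu, k, le_add_self⟩
      have hzero : topPart ℓ g w n (monomial u 1 * g k - monomial (u + ℓ k) 1) = 0 :=
        topPart_eq_zero (fun m hm hm' => hm.ne (hm'.1.trans hu.symm)) (h.monomial_mul_sub_mem u k)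
      rw [map_sub, sub_eq_zero] at hzero
      rw [hzero, topPart_monomial, dif_pos hex]
      have := h.sPolynomial_mem k hex.2.choose (u + ℓ k) le_add_self hex.2.choose_spec
      rw [add_tsub_cancel_right] at this
      exact multiplesBelow_mono hu.le this
  | zero => simp
  | add f f' _ _ hf hf' => rw [map_add, add_sub_add_comm]; exact add_mem hf hf'
  | smul a f _ hf => rw [map_smul, ← smul_sub]; exact Submodule.smul_mem _ _ hf

/-- Standard polynomials in the ideal vanish. -/
theorem eq_zero_of_mem_span (h : IsGroebnerBasis w ℓ g) {f : MvPolynomial σ K}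
    (hf : f ∈ Ideal.span (Set.range g)) (hstd : f ∈ restrictSupport K (standardMonomials ℓ)) :
    f = 0 := by
  obtain ⟨n, hn⟩ := exists_mem_multiplesBelow (w := w) (ℓ := ℓ) hf
  induction n with
  | zero => simpa [multiplesBelow] using hn
  | succ n ih =>
    have := h.sub_topPart_mem hn
    rw [topPart_eq_zero (fun m hm hm' => hm'.2.elim hm) hstd, sub_zero] at this
    exact ih this

theorem monomial_mem_sup (h : IsGroebnerBasis w ℓ g)
    (hg : ∀ i, (g i).IsHomogeneous (ℓ i).degree) (m : σ →₀ ℕ) :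
    monomial m 1 ∈
      homogeneousSubmodule σ K m.degree ⊓ (Ideal.span (Set.range g)).restrictScalars K ⊔
        restrictSupport K {m' | m' ∈ standardMonomials ℓ ∧ m'.degree = m.degree} := by
  induction hn : w m using Nat.strong_induction_on generalizing m with
  | _ n ih =>
  subst hn
  by_cases hm : m ∈ standardMonomials ℓ
  · exact Submodule.mem_sup_right ((monomial_mem_restrictSupport K).mpr (Or.inl ⟨hm, rfl⟩))
  obtain ⟨i, hi⟩ := not_forall_not.mp hm
  obtain ⟨u, rfl⟩ := le_iff_exists_add'.mp hi
  have hhom : (monomial u 1 * g i).IsHomogeneous (u + ℓ i).degree := by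
    rw [map_add]
    exact (isHomogeneous_monomial 1 rfl).mul (hg i)
  rw [← sub_sub_cancel (monomial u 1 * g i) (monomial (u + ℓ i) 1)]
  refine sub_mem (Submodule.mem_sup_left ⟨hhom,
    Ideal.mul_mem_left _ _ (Ideal.subset_span ⟨i, rfl⟩)⟩) ?_
  have htail := h.monomial_mul_sub_mem u i
  have htail' := (homogeneousSubmodule σ K _).sub_mem hhom
    (isHomogeneous_monomial (1 : K) (rfl : (u + ℓ i).degree = _))
  generalize monomial u 1 * g i - monomial (u + ℓ i) 1 = p at htail htail'
  rw [p.as_sum]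
  refine Submodule.sum_mem _ fun m' hm' => ?_
  have hdeg : m'.degree = (u + ℓ i).degree := by
    by_contra hne
    exact mem_support_iff.mp hm' (IsHomogeneous.coeff_eq_zero htail' hne)
  have := ih _ ((mem_restrictSupport_iff K).mp htail hm') m' rfl
  rw [hdeg] at this
  have := Submodule.smul_mem _ (coeff m' p) this
  rwa [smul_monomial, smul_eq_mul, mul_one] at this

theorem sup_eq_homogeneousSubmodule (h : IsGroebnerBasis w ℓ g)
    (hg : ∀ i, (g i).IsHomogeneous (ℓ i).degree) (t : ℕ) :
    homogeneousSubmodule σ K t ⊓ (Ideal.span (Set.range g)).restrictScalars K ⊔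
      restrictSupport K {m | m ∈ standardMonomials ℓ ∧ m.degree = t} =
        homogeneousSubmodule σ K t := by
  have hrs : homogeneousSubmodule σ K t = restrictSupport K {m | m.degree = t} :=
    homogeneousSubmodule_eq_finsupp_supported σ K t
  apply le_antisymm
  · refine sup_le inf_le_left ?_
    rw [hrs]
    exact restrictSupport_mono K fun m hm => hm.2
  · nth_rw 1 [hrs]
    rw [restrictSupport_eq_span, Submodule.span_le]
    rintro _ ⟨m, rfl, rfl⟩
    exact h.monomial_mem_sup hg m

/-- The Hilbert function of a homogeneous ideal counts standard monomials. -/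
theorem finrank_homogeneousSubmodule [Finite σ] (h : IsGroebnerBasis w ℓ g)
    (hg : ∀ i, (g i).IsHomogeneous (ℓ i).degree) (t : ℕ) :
    Module.finrank K (homogeneousSubmodule σ K t) =
      Module.finrank K ↥(homogeneousSubmodule σ K t ⊓
        (Ideal.span (Set.range g)).restrictScalars K) +
      {m | m ∈ standardMonomials ℓ ∧ m.degree = t}.ncard := by
  have := finite_homogeneousSubmodule σ K t
  have hcard : Module.finrank K (restrictSupport K {m | m ∈ standardMonomials ℓ ∧ m.degree = t}) =
      {m | m ∈ standardMonomials ℓ ∧ m.degree = t}.ncard :=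
    Module.finrank_eq_nat_card_basis (basisRestrictSupport K _)
  have hle := h.sup_eq_homogeneousSubmodule hg t
  have : Module.Finite K (restrictSupport K {m | m ∈ standardMonomials ℓ ∧ m.degree = t}) :=
    Submodule.finiteDimensional_of_le (hle ▸ le_sup_right)
  have hsum := Submodule.finrank_sup_add_finrank_inf_eq
    (homogeneousSubmodule σ K t ⊓ (Ideal.span (Set.range g)).restrictScalars K)
    (restrictSupport K {m | m ∈ standardMonomials ℓ ∧ m.degree = t})
  have hinf : homogeneousSubmodule σ K t ⊓ (Ideal.span (Set.range g)).restrictScalars K ⊓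
      restrictSupport K {m | m ∈ standardMonomials ℓ ∧ m.degree = t} = ⊥ :=
    (Submodule.eq_bot_iff _).mpr fun f hf => h.eq_zero_of_mem_span hf.1.2
      (restrictSupport_mono K (fun m hm => hm.1) hf.2)
  rw [hle, hinf, finrank_bot, hcard, add_zero] at hsum
  exact hsum

/-- A variable dividing no leading monomial is a nonzerodivisor modulo the ideal. -/
theorem mem_span_of_X_pow_mul_mem (h : IsGroebnerBasis w ℓ g)
    (hg : ∀ i, (g i).IsHomogeneous (ℓ i).degree) {v : σ} (hv : ∀ i, ℓ i v = 0) {n : ℕ}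
    {f : MvPolynomial σ K} (hf : X v ^ n * f ∈ Ideal.span (Set.range g)) :
    f ∈ Ideal.span (Set.range g) := by
  have hsplit : f ∈ (Ideal.span (Set.range g)).restrictScalars K ⊔
      restrictSupport K (standardMonomials ℓ) := by
    rw [f.as_sum]
    refine Submodule.sum_mem _ fun m _ => ?_
    have := Submodule.smul_mem _ (coeff m f) (h.monomial_mem_sup hg m)
    rw [smul_monomial, smul_eq_mul, mul_one] at this
    exact sup_le_sup inf_le_right (restrictSupport_mono K fun m hm => hm.1) this
  obtain ⟨a, ha, b, hb, rfl⟩ := Submodule.mem_sup.mp hsplit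
  have hXb : X v ^ n * b ∈ Ideal.span (Set.range g) := by
    rw [mul_add] at hf
    exact (Ideal.add_mem_iff_right _ (Ideal.mul_mem_left _ _ ha)).mp hf
  have hstd : X v ^ n * b ∈ restrictSupport K (standardMonomials ℓ) := by
    rw [mem_restrictSupport_iff] at hb ⊢
    intro m hm i hi
    classical
    rw [X_pow_eq_monomial] at hm
    obtain ⟨c, hc, d, hd, rfl⟩ := Finset.mem_add.mp (support_mul _ _ hm)
    obtain rfl := Finset.mem_singleton.mp (support_monomial_subset hc)
    refine hb hd i fun x => ?_
    by_cases hx : x = v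
    · simp [hx, hv]
    · simpa [Finsupp.single_apply, Ne.symm hx] using hi x
  have hb0 : b = 0 := by
    have := h.eq_zero_of_mem_span hXb hstd
    exact (mul_eq_zero.mp this).resolve_left (pow_ne_zero _ (X_ne_zero v))
  rw [hb0, add_zero]
  exact ha

end IsGroebnerBasis

end Groebner

/-- Weights of the variables, selecting the leading monomials of the quadrics. -/
def varWeight : Fin 21 → ℕ := ![6, 5, 0, 0, 2, 5, 0, 8, 6, 8, 5, 8, 7, 2, 2, 8, 8, 2, 0, 5, 7]

/-- The two variables in the leading monomial of each quadric. -/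
def leadPair : Fin 21 → Fin 21 × Fin 21 :=
  ![(9, 16), (8, 16), (8, 15), (5, 15), (12, 20), (7, 20), (7, 16), (7, 15), (8, 12), (10, 11),
    (9, 11), (8, 11), (7, 11), (1, 16), (0, 16), (0, 15), (5, 9), (1, 10), (0, 10), (0, 9),
    (1, 5)]

/-- The lower terms `c * x p * x q` of each quadric, normalized to have leading coefficient `1`. -/
def lowerTerms : Fin 21 → List (ℤ × Fin 21 × Fin 21) :=
  ![[(-1, 10, 15), (-1, 6, 20)], [(-1, 10, 14), (-1, 5, 20)], [(-1, 9, 14), (-1, 4, 20)],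
    [(-1, 6, 14), (-1, 4, 16)], [(1, 11, 13), (-1, 16, 17), (1, 15, 18), (-1, 14, 19)],
    [(1, 3, 13), (-1, 10, 17), (1, 9, 18), (-1, 8, 19)],
    [(-1, 10, 12), (1, 2, 13), (1, 6, 18), (-1, 5, 19)],
    [(-1, 9, 12), (1, 1, 13), (1, 6, 17), (-1, 4, 19)],
    [(-1, 0, 13), (-1, 7, 14), (-1, 5, 17), (1, 4, 18)], [(-1, 3, 16), (1, 2, 20)],
    [(-1, 3, 15), (1, 1, 20)], [(-1, 3, 14), (1, 0, 20)],
    [(-1, 3, 12), (1, 2, 17), (-1, 1, 18), (1, 0, 19)], [(1, 6, 11), (-1, 2, 15)],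
    [(1, 5, 11), (-1, 2, 14)], [(1, 4, 11), (-1, 1, 14)], [(-1, 6, 8), (-1, 4, 10)],
    [(1, 3, 6), (-1, 2, 9)], [(1, 3, 5), (-1, 2, 8)], [(1, 3, 4), (-1, 1, 8)],
    [(-1, 2, 4), (-1, 0, 6)]]

/-- Entries `(p, i, q, j, [(c, u, k), …])` record linear syzygies
`x p * g i - x q * g j = ∑ c * x u * g k` among the normalized quadrics. -/
def linearSyzygies :
    List (Fin 21 × Fin 21 × Fin 21 × Fin 21 × List (ℤ × Fin 21 × Fin 21)) :=
  [(8, 0, 9, 1, [(1, 20, 16), (-1, 10, 2)]),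
    (7, 0, 9, 6, [(-1, 10, 7), (1, 19, 16), (-1, 6, 5), (1, 13, 17)]),
    (11, 0, 16, 10, [(-1, 15, 9), (-1, 20, 13)]), (1, 0, 9, 13, [(-1, 15, 17), (-1, 6, 10)]),
    (0, 0, 9, 14, [(-1, 5, 10), (-1, 10, 15), (1, 20, 20), (1, 4, 9), (-1, 3, 3), (-1, 14, 17)]),
    (5, 0, 16, 16, [(-1, 10, 3), (1, 6, 1)]),
    (0, 0, 16, 19, [(1, 1, 1), (-1, 10, 15), (1, 20, 20), (1, 4, 9)]),
    (15, 1, 16, 2, [(-1, 20, 3), (1, 14, 0)]),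
    (7, 1, 8, 6, [(-1, 5, 5), (1, 10, 8), (1, 18, 16), (1, 13, 18)]),
    (12, 1, 16, 8, [(-1, 5, 4), (1, 14, 6), (1, 13, 14), (1, 18, 3)]),
    (11, 1, 16, 11, [(-1, 20, 14), (-1, 14, 9)]),
    (1, 1, 8, 13, [(-1, 20, 20), (-1, 6, 11), (1, 2, 2), (-1, 14, 17)]),
    (0, 1, 8, 14, [(-1, 5, 11), (-1, 14, 18)]), (5, 2, 8, 3, [(1, 4, 1), (-1, 14, 16)]),
    (7, 2, 8, 7, [(1, 9, 8), (-1, 4, 5), (1, 13, 19), (1, 17, 16)]),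
    (12, 2, 15, 8, [(1, 14, 7), (-1, 4, 4), (1, 13, 15), (1, 17, 3)]),
    (11, 2, 15, 11, [(-1, 20, 15), (-1, 14, 10)]), (0, 2, 8, 15, [(-1, 4, 11), (-1, 14, 19)]),
    (7, 3, 5, 7, [(1, 12, 16), (-1, 4, 6), (1, 6, 8), (-1, 13, 20)]),
    (0, 3, 5, 15, [(-1, 4, 14), (1, 14, 20)]), (9, 3, 15, 16, [(-1, 4, 0), (1, 6, 2)]),
    (1, 3, 15, 20, [(-1, 4, 13), (1, 6, 15)]),
    (7, 4, 12, 5, [(1, 19, 8), (-1, 17, 6), (1, 13, 12), (1, 18, 7)]),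
    (8, 4, 20, 8, [(1, 14, 5), (-1, 17, 1), (1, 13, 11), (1, 18, 2)]),
    (16, 5, 20, 6, [(1, 10, 4), (-1, 19, 1), (1, 18, 0), (-1, 13, 9)]),
    (15, 5, 20, 7, [(1, 9, 4), (-1, 19, 2), (1, 17, 0), (-1, 13, 10)]),
    (11, 5, 20, 12, [(-1, 19, 11), (1, 18, 10), (-1, 17, 9), (1, 3, 4)]),
    (15, 6, 16, 7, [(1, 12, 0), (-1, 19, 3), (-1, 13, 13), (1, 6, 4)]),
    (11, 6, 16, 12, [(-1, 12, 9), (-1, 19, 14), (1, 2, 4), (1, 18, 13)]),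
    (1, 6, 7, 13, [(-1, 12, 17), (-1, 6, 12), (1, 2, 7), (-1, 19, 20)]),
    (0, 6, 7, 14, [(-1, 5, 12), (-1, 12, 18), (-1, 2, 8), (-1, 18, 20)]),
    (11, 7, 15, 12, [(-1, 12, 10), (1, 1, 4), (-1, 19, 15), (1, 17, 13)]),
    (0, 7, 7, 15, [(-1, 12, 19), (-1, 4, 12), (-1, 1, 8), (-1, 17, 20)]),
    (11, 8, 12, 11, [(-1, 0, 4), (-1, 14, 12), (-1, 17, 14), (1, 18, 15)]),
    (9, 9, 10, 10, [(-1, 20, 17), (-1, 3, 0)]), (8, 9, 10, 11, [(-1, 20, 18), (-1, 3, 1)]),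
    (7, 9, 10, 12, [(-1, 3, 6), (-1, 19, 18), (1, 2, 5), (1, 18, 17)]),
    (1, 9, 11, 17, [(1, 2, 10), (-1, 3, 13)]), (0, 9, 11, 18, [(1, 2, 11), (-1, 3, 14)]),
    (8, 10, 9, 11, [(-1, 20, 19), (-1, 3, 2)]),
    (7, 10, 9, 12, [(1, 1, 5), (-1, 19, 19), (-1, 3, 7), (1, 17, 17)]),
    (5, 10, 11, 16, [(1, 20, 20), (1, 4, 9), (1, 6, 11), (-1, 3, 3)]),
    (0, 10, 11, 19, [(1, 1, 11), (-1, 3, 15)]),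
    (7, 11, 8, 12, [(1, 0, 5), (-1, 18, 19), (1, 3, 8), (1, 17, 18)]),
    (0, 13, 1, 14, [(-1, 11, 20), (-1, 2, 15)]), (10, 13, 16, 17, [(1, 2, 0), (1, 6, 9)]),
    (5, 13, 16, 20, [(1, 6, 14), (-1, 2, 3)]), (15, 14, 16, 15, [(1, 11, 3), (1, 14, 13)]),
    (10, 14, 16, 18, [(1, 5, 9), (1, 2, 1)]),
    (9, 14, 16, 19, [(1, 5, 10), (1, 1, 1), (1, 3, 3), (1, 14, 17)]),
    (10, 15, 15, 18, [(1, 4, 9), (1, 2, 2), (-1, 3, 3), (-1, 14, 17)]),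
    (9, 15, 15, 19, [(1, 1, 2), (1, 4, 10)]), (0, 16, 5, 19, [(1, 8, 20), (-1, 4, 18)]),
    (1, 16, 9, 20, [(1, 6, 19), (-1, 4, 17)]), (0, 17, 1, 18, [(-1, 2, 19), (-1, 3, 20)]),
    (5, 17, 10, 20, [(-1, 2, 16), (1, 6, 18)]), (9, 18, 10, 19, [(1, 8, 17), (1, 3, 16)])]

/-- The quadric with leading monomial `leadPair i` and tail `lowerTerms i`, evaluated at `x`. -/
def quadric {R : Type*} [CommRing R] (x : Fin 21 → R) (i : Fin 21) : R :=
  x (leadPair i).1 * x (leadPair i).2 +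
    ((lowerTerms i).map fun t => (t.1 : R) * (x t.2.1 * x t.2.2)).sum

theorem quadric_syzygy {R : Type*} [CommRing R] (x : Fin 21 → R) :
    ∀ s ∈ linearSyzygies, x s.1 * quadric x s.2.1 - x s.2.2.1 * quadric x s.2.2.2.1 =
      (s.2.2.2.2.map fun t => (t.1 : R) * (x t.2.1 * quadric x t.2.2)).sum := by
  simp only [linearSyzygies, List.forall_mem_cons, List.not_mem_nil, false_imp_iff, implies_true,
    and_true]
  simp only [quadric, leadPair, lowerTerms, Matrix.cons_val, List.map_cons, List.map_nil,
    List.sum_cons, List.sum_nil, Int.cast_neg, Int.cast_one]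
  and_intros <;> ring

theorem span_quadric : Ideal.span (Set.range (quadric y)) = idealOmegaP20 := by
  have h : ∀ i, quadric y i = omegaP20 i ∨ quadric y i = -omegaP20 i := by
    intro i
    fin_cases i <;>
      simp only [quadric, leadPair, lowerTerms, omegaP20, Matrix.cons_val, List.map_cons,
        List.map_nil, List.sum_cons, List.sum_nil, Int.cast_neg, Int.cast_one, Fin.reduceFinMk,
        Fin.mk_one, Fin.zero_eta, Fin.isValue] <;>
      first | (left; ring1) | (right; ring1)
  apply le_antisymm <;> refine Ideal.span_le.mpr ?_ <;> rintro _ ⟨i, rfl⟩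
  · rcases h i with h | h <;> rw [h]
    · exact Ideal.subset_span ⟨i, rfl⟩
    · exact neg_mem (Ideal.subset_span ⟨i, rfl⟩)
  · rcases h i with h | h
    · exact h ▸ Ideal.subset_span ⟨i, rfl⟩
    · rw [← neg_neg (omegaP20 i), ← h]
      exact neg_mem (Ideal.subset_span ⟨i, rfl⟩)

/-- The exponent of the leading monomial of each quadric. -/
def leadExponent (i : Fin 21) : Fin 21 →₀ ℕ :=
  Finsupp.single (leadPair i).1 1 + Finsupp.single (leadPair i).2 1

theorem monomial_leadExponent (i : Fin 21) :
    (monomial (leadExponent i) 1 : MvPolynomial (Fin 21) ℚ) =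
      y (leadPair i).1 * y (leadPair i).2 := by
  simp only [leadExponent, y, X, monomial_mul, one_mul]

theorem isHomogeneous_quadric (i : Fin 21) :
    (quadric y i).IsHomogeneous (leadExponent i).degree := by
  have hX : ∀ p q, (y p * y q).IsHomogeneous 2 := fun p q =>
    (isHomogeneous_X ℚ p).mul (isHomogeneous_X ℚ q)
  have hdeg : (leadExponent i).degree = 2 := by simp [leadExponent]
  rw [hdeg, quadric]
  refine (hX _ _).add ?_
  induction lowerTerms i with
  | nil => exact isHomogeneous_zero _ _ _
  | cons t l ih =>
    rw [List.map_cons, List.sum_cons]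
    refine IsHomogeneous.add ?_ ih
    rw [← zsmul_eq_mul]
    exact zsmul_mem (S := Submodule ℚ _) (K := homogeneousSubmodule (Fin 21) ℚ 2) (hX _ _) _

theorem weight_leadExponent (i : Fin 21) :
    Finsupp.weight varWeight (leadExponent i) =
      varWeight (leadPair i).1 + varWeight (leadPair i).2 := by
  simp [leadExponent, Finsupp.weight_single]

theorem quadric_tail_mem (i : Fin 21) :
    quadric y i - monomial (leadExponent i) 1 ∈ restrictSupport ℚ
      {m | Finsupp.weight varWeight m < Finsupp.weight varWeight (leadExponent i)} := by
  have h : ∀ i, ∀ t ∈ lowerTerms i, varWeight t.2.1 + varWeight t.2.2 <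
      varWeight (leadPair i).1 + varWeight (leadPair i).2 := by decide +kernel
  rw [monomial_leadExponent, quadric, add_sub_cancel_left, weight_leadExponent]
  refine list_sum_mem ?_
  simp only [List.mem_map, forall_exists_index, and_imp, forall_apply_eq_imp_iff₂]
  intro t ht
  rw [← zsmul_eq_mul]
  simp only [y, X, monomial_mul, one_mul]
  refine zsmul_mem ((monomial_mem_restrictSupport ℚ).mpr (Or.inl ?_)) _
  simpa [Finsupp.weight_single] using h i t ht

theorem linearSyzygies_weight_lt : ∀ s ∈ linearSyzygies, ∀ t ∈ s.2.2.2.2,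
    varWeight t.2.1 + (varWeight (leadPair t.2.2).1 + varWeight (leadPair t.2.2).2) <
      varWeight s.1 + (varWeight (leadPair s.2.1).1 + varWeight (leadPair s.2.1).2) := by
  decide +kernel

theorem exists_linearSyzygy : ∀ i j : Fin 21, i < j →
    ((leadPair i).1 ≠ (leadPair j).1 ∧ (leadPair i).1 ≠ (leadPair j).2 ∧
      (leadPair i).2 ≠ (leadPair j).1 ∧ (leadPair i).2 ≠ (leadPair j).2) ∨
    ∃ s ∈ linearSyzygies, s.2.1 = i ∧ s.2.2.2.1 = j ∧ s.1 ≠ s.2.2.1 ∧ ∃ c,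
      (leadPair i = (c, s.2.2.1) ∨ leadPair i = (s.2.2.1, c)) ∧
      (leadPair j = (c, s.1) ∨ leadPair j = (s.1, c)) := by
  decide +kernel

theorem sPolynomial_quadric_mem {i j : Fin 21} (hij : i < j) {m : Fin 21 →₀ ℕ}
    (hi : leadExponent i ≤ m) (hj : leadExponent j ≤ m) :
    monomial (m - leadExponent i) 1 * quadric y i - monomial (m - leadExponent j) 1 * quadric y j ∈
      multiplesBelow (Finsupp.weight varWeight) leadExponent (quadric y)
        (Finsupp.weight varWeight m) := by
  rcases exists_linearSyzygy i j hij with h | ⟨⟨p, i, q, j, l⟩, hs, rfl, rfl, hpq, c, hpi, hqj⟩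
  · refine sPolynomial_mem_of_coprime (fun x => ?_) (quadric_tail_mem i) (quadric_tail_mem j) hi hj
    simp only [leadExponent, Finsupp.add_apply, Finsupp.single_apply]
    grind
  · dsimp only at hpq hpi hqj hi hj ⊢
    have hlcm : Finsupp.single p 1 + leadExponent i = Finsupp.single q 1 + leadExponent j := by
      rcases hpi with hpi | hpi <;> rcases hqj with hqj | hqj <;>
        simp only [leadExponent, hpi, hqj] <;> abel
    refine sPolynomial_mem_of_lcm hlcm (fun x => ?_) ?_ hi hj
    · simp only [Finsupp.single_apply]
      grind
    · have hsyz := quadric_syzygy y _ hs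
      have hlt := linearSyzygies_weight_lt _ hs
      dsimp only at hsyz hlt
      change X p * quadric y i - X q * quadric y j ∈ _
      rw [hsyz]
      refine list_sum_mem ?_
      simp only [List.mem_map, forall_exists_index, and_imp, forall_apply_eq_imp_iff₂]
      intro t ht
      rw [← zsmul_eq_mul]
      refine zsmul_mem (monomial_mul_mem_multiplesBelow 1 ?_) _
      simpa [Finsupp.weight_single, weight_leadExponent] using hlt t ht

theorem isGroebnerBasis_quadric :
    IsGroebnerBasis (Finsupp.weight varWeight) leadExponent (quadric y) where
  tail_mem := quadric_tail_mem
  sPolynomial_mem i j m hi hj := by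
    rcases lt_trichotomy i j with h | rfl | h
    · exact sPolynomial_quadric_mem h hi hj
    · rw [sub_self]
      exact zero_mem _
    · rw [← neg_sub]
      exact neg_mem (sPolynomial_quadric_mem h hj hi)

theorem idealOmegaP20Sat_eq : idealOmegaP20Sat = idealOmegaP20 := by
  apply le_antisymm
  · refine iSup_le fun t f hf => ?_
    rw [← span_quadric]
    refine isGroebnerBasis_quadric.mem_span_of_X_pow_mul_mem isHomogeneous_quadric (v := 2)
      (n := t) ?_ ?_
    · have h : ∀ i, (leadPair i).1 ≠ 2 ∧ (leadPair i).2 ≠ 2 := by decide +kernel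
      intro i
      simp [leadExponent, h]
    · rw [span_quadric, mul_comm]
      exact Submodule.mem_colon.mp hf _
        (Ideal.pow_mem_pow (Ideal.subset_span (Set.mem_range_self 2)) t)
  · refine le_iSup_of_le 0 fun f hf => Submodule.mem_colon.mpr fun p _ => ?_
    exact Ideal.mul_mem_right p _ hf

/-- Intervals `[R, F]` partitioning the sets of variables which occur in some leading monomial and
contain no `leadPair`. -/
def intervals : Fin 33 → List (Fin 21) × List (Fin 21) :=
  ![([], [11, 15, 16, 20]), ([12], [11, 12, 15, 16]), ([10], [10, 15, 16, 20]),
    ([10, 12], [10, 12, 15, 16]), ([9], [9, 10, 15, 20]), ([9, 12], [9, 10, 12, 15]),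
    ([8], [8, 9, 10, 20]), ([7], [7, 9, 10, 12]), ([7, 8], [7, 8, 9, 10]),
    ([5], [5, 11, 16, 20]), ([5, 12], [5, 11, 12, 16]), ([5, 10], [5, 10, 16, 20]),
    ([5, 10, 12], [5, 10, 12, 16]), ([5, 8], [5, 8, 10, 20]), ([5, 7], [5, 7, 10, 12]),
    ([5, 7, 8], [5, 7, 8, 10]), ([1], [1, 11, 15, 20]), ([1, 12], [1, 11, 12, 15]),
    ([1, 9], [1, 9, 15, 20]), ([1, 9, 12], [1, 9, 12, 15]), ([1, 8], [1, 8, 9, 20]),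
    ([1, 7], [1, 7, 9, 12]), ([1, 7, 8], [1, 7, 8, 9]), ([0], [0, 5, 11, 12]),
    ([0, 20], [0, 5, 11, 20]), ([0, 8], [0, 5, 8, 20]), ([0, 7], [0, 5, 7, 12]),
    ([0, 7, 8], [0, 5, 7, 8]), ([0, 1], [0, 1, 11, 20]), ([0, 1, 12], [0, 1, 11, 12]),
    ([0, 1, 8], [0, 1, 8, 20]), ([0, 1, 7], [0, 1, 7, 12]), ([0, 1, 7, 8], [0, 1, 7, 8])]

/-- The independent sublists of a list, for a symmetric relation `r`. -/
def independentSublists {α : Type*} (r : α → α → Prop) [DecidableRel r] : List α → List (List α)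
  | [] => [[]]
  | v :: l => independentSublists r l ++
      ((independentSublists r l).filter fun s => ∀ u ∈ s, ¬ r v u).map (v :: ·)

theorem filter_mem_independentSublists {α : Type*} (r : α → α → Prop) [DecidableRel r]
    (p : α → Prop) [DecidablePred p] (h : ∀ u v, p u → p v → ¬ r u v) (l : List α) :
    l.filter p ∈ independentSublists r l := by
  induction l with
  | nil => simp [independentSublists]
  | cons v l ih =>
    rw [independentSublists, List.mem_append]
    by_cases hv : p v
    · refine Or.inr (List.mem_map.mpr ⟨l.filter p, List.mem_filter.mpr ⟨ih, ?_⟩, ?_⟩)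
      · simpa using fun u _ hu => h v u hv hu
      · simp [hv]
    · exact Or.inl (by simpa [hv] using ih)

/-- The variables occurring in some leading monomial. -/
def activeVars : List (Fin 21) := [0, 1, 5, 7, 8, 9, 10, 11, 12, 15, 16, 20]

theorem exists_interval_of_mem_independentSublists :
    ∀ s ∈ independentSublists (fun u v => ∃ i, leadPair i = (u, v) ∨ leadPair i = (v, u))
      activeVars, ∃ k, (∀ v ∈ (intervals k).1, v ∈ s) ∧ ∀ v ∈ s, v ∈ (intervals k).2 := by
  decide +kernel

/-- The upper end of an interval, as a set of variables, including those in no `leadPair`. -/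
def facet (k : Fin 33) : Finset (Fin 21) :=
  Finset.univ.filter fun v => v ∈ activeVars → v ∈ (intervals k).2

/-- The lower end of an interval, as a set of variables. -/
def root (k : Fin 33) : Finset (Fin 21) := (intervals k).1.toFinset

theorem card_facet : ∀ k, (facet k).card = 13 := by decide +kernel

theorem root_subset_facet : ∀ k, root k ⊆ facet k := by decide +kernel

theorem leadPair_notMem_facet :
    ∀ k i, (leadPair i).1 ∈ facet k → (leadPair i).2 ∉ facet k := by decide +kernel

theorem eq_of_root_subset_facet :
    ∀ k k', root k ⊆ facet k' → root k' ⊆ facet k → k = k' := by decide +kernel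

theorem exists_root_subset_subset_facet (s : Finset (Fin 21))
    (hs : ∀ i, (leadPair i).1 ∈ s → (leadPair i).2 ∉ s) : ∃ k, root k ⊆ s ∧ s ⊆ facet k := by
  obtain ⟨k, hk, hk'⟩ := exists_interval_of_mem_independentSublists _
    (filter_mem_independentSublists _ (· ∈ s) (by
      rintro u v hu hv ⟨i, hi | hi⟩ <;> have := hs i <;> simp_all) activeVars)
  refine ⟨k, fun v hv => ?_, fun v hv => ?_⟩
  · simpa using (List.mem_filter.mp (hk v (List.mem_toFinset.mp hv))).2
  · rw [facet, Finset.mem_filter]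
    exact ⟨Finset.mem_univ v, fun hva => hk' v (List.mem_filter.mpr ⟨hva, by simpa using hv⟩)⟩

theorem sum_card_root {M : Type*} [AddCommMonoid M] (f : ℕ → M) :
    ∑ k, f (root k).card = f 0 + 8 • f 1 + 15 • f 2 + 8 • f 3 + f 4 := by
  have h : ∀ k, (root k).card = ![0, 1, 1, 2, 1, 2, 1, 1, 2, 1, 2, 2, 3, 2, 2, 3, 1, 2, 2, 3, 2, 2,
      3, 1, 2, 2, 2, 3, 2, 3, 3, 3, 4] k := by decide +kernel
  simp only [h, Fin.sum_univ_succ, Matrix.cons_val_zero, Matrix.cons_val_succ,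
    Finset.univ_eq_empty, Finset.sum_empty]
  abel

theorem degree_eq_sum_of_support_subset {σ : Type*} {F : Finset σ} {m : σ →₀ ℕ}
    (h : m.support ⊆ F) : m.degree = ∑ v ∈ F, m v :=
  Finset.sum_subset h fun _ _ hv => Finsupp.notMem_support_iff.mp hv

/-- Stars and bars for the monomials of degree `t` with support in the interval `[R, F]`. -/
theorem ncard_support_mem_Icc {σ : Type*} [DecidableEq σ] {R F : Finset σ} (hRF : R ⊆ F) {t : ℕ}
    (ht : R.card ≤ t) : {m : σ →₀ ℕ | m.degree = t ∧ R ⊆ m.support ∧ m.support ⊆ F}.ncard =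
      (F.card + (t - R.card) - 1).choose (t - R.card) := by
  let e : σ →₀ ℕ := Finsupp.indicator R fun _ _ => 1
  have he : ∀ v, e v = if v ∈ R then 1 else 0 := fun v => by simp [e, Finsupp.indicator_apply]
  have hes : e.support = R := by ext v; simp [he]
  have hed : e.degree = R.card := by
    rw [degree_eq_sum_of_support_subset hes.le, Finset.card_eq_sum_ones]
    exact Finset.sum_congr rfl fun v hv => by simp [he, hv]
  rw [← Finset.card_finsuppAntidiag_nat_eq_choose, ← Set.ncard_coe_finset,
    ← Set.ncard_image_of_injective (F.finsuppAntidiag (t - R.card) : Set (σ →₀ ℕ))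
      (add_right_injective e)]
  congr 1
  ext m
  simp only [Set.mem_ofPred_eq, Set.mem_image, Finset.mem_coe, Finset.mem_finsuppAntidiag]
  constructor
  · rintro ⟨hm, hRm, hmF⟩
    have hle : e ≤ m := fun v => by
      rw [he]
      split_ifs with hv
      · exact Nat.one_le_iff_ne_zero.mpr (Finsupp.mem_support_iff.mp (hRm hv))
      · exact Nat.zero_le _
    obtain ⟨n, rfl⟩ := le_iff_exists_add.mp hle
    have hn : n.support ⊆ F := (Finsupp.support_mono le_add_self).trans hmF
    refine ⟨n, ⟨?_, hn⟩, rfl⟩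
    rw [← degree_eq_sum_of_support_subset hn]
    rw [map_add, hed] at hm
    omega
  · rintro ⟨n, ⟨hn, hnF⟩, rfl⟩
    rw [← degree_eq_sum_of_support_subset hnF] at hn
    refine ⟨by rw [map_add, hed, hn]; omega, ?_, ?_⟩
    · exact hes.ge.trans (Finsupp.support_mono le_self_add)
    · exact Finsupp.support_add.trans (Finset.union_subset (hes.le.trans hRF) hnF)

theorem ncard_degree_eq (n t : ℕ) :
    {m : Fin (n + 1) →₀ ℕ | m.degree = t}.ncard = (t + n).choose n := by
  have := ncard_support_mem_Icc (Finset.subset_univ (∅ : Finset (Fin (n + 1)))) (Nat.zero_le t)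
  simp only [Finset.empty_subset, Finset.subset_univ, and_true, Finset.card_univ,
    Fintype.card_fin, Finset.card_empty, tsub_zero] at this
  rw [this, add_right_comm, Nat.add_sub_cancel, add_comm n, Nat.choose_symm_add]

theorem leadExponent_le_iff {i : Fin 21} {m : Fin 21 →₀ ℕ} :
    leadExponent i ≤ m ↔ (leadPair i).1 ∈ m.support ∧ (leadPair i).2 ∈ m.support := by
  have hne : ∀ i, (leadPair i).1 ≠ (leadPair i).2 := by decide +kernel
  simp only [Finsupp.mem_support_iff, ← Nat.one_le_iff_ne_zero, leadExponent]
  refine ⟨fun h => ?_, fun ⟨h, h'⟩ v => ?_⟩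
  · have h1 := h (leadPair i).1
    have h2 := h (leadPair i).2
    simp only [Finsupp.add_apply, Finsupp.single_eq_same] at h1 h2
    omega
  · have := hne i
    simp only [Finsupp.add_apply, Finsupp.single_apply]
    grind

theorem mem_standardMonomials_iff {m : Fin 21 →₀ ℕ} :
    m ∈ standardMonomials leadExponent ↔ ∃ k, root k ⊆ m.support ∧ m.support ⊆ facet k := by
  simp only [standardMonomials, Set.mem_ofPred_eq, leadExponent_le_iff, not_and]
  refine ⟨exists_root_subset_subset_facet _, fun ⟨k, _, hk⟩ i h h' => ?_⟩
  exact leadPair_notMem_facet k i (hk h) (hk h')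

theorem ncard_standardMonomials {t : ℕ} (ht : 4 ≤ t) :
    {m | m ∈ standardMonomials leadExponent ∧ m.degree = t}.ncard =
      (t + 12).choose 12 + 8 * (t + 11).choose 12 + 15 * (t + 10).choose 12 +
        8 * (t + 9).choose 12 + (t + 8).choose 12 := by
  have hunion : {m | m ∈ standardMonomials leadExponent ∧ m.degree = t} =
      ⋃ k, {m | m.degree = t ∧ root k ⊆ m.support ∧ m.support ⊆ facet k} := by
    ext m
    simp only [Set.mem_ofPred_eq, Set.mem_iUnion, mem_standardMonomials_iff, exists_and_left,
      and_comm (b := m.degree = t)]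
  have hdisj : Pairwise (Function.onFun Disjoint fun k =>
      {m : Fin 21 →₀ ℕ | m.degree = t ∧ root k ⊆ m.support ∧ m.support ⊆ facet k}) :=
    fun k k' hkk' => Set.disjoint_left.mpr fun m hm hm' =>
      hkk' (eq_of_root_subset_facet k k' (hm.2.1.trans hm'.2.2) (hm'.2.1.trans hm.2.2))
  have hle : ∀ k, (root k).card ≤ 4 := by decide +kernel
  rw [hunion, Set.ncard_iUnion_of_finite
    (fun k => (Finsupp.finite_of_degree_le t).subset fun m hm => hm.1.le) hdisj,
    finsum_eq_sum_of_fintype]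
  have hcard : ∀ k, {m : Fin 21 →₀ ℕ | m.degree = t ∧ root k ⊆ m.support ∧
      m.support ⊆ facet k}.ncard = (t + 12 - (root k).card).choose 12 := fun k => by
    have := (hle k).trans ht
    rw [ncard_support_mem_Icc (root_subset_facet k) this, card_facet,
      show 13 + (t - (root k).card) - 1 = t + 12 - (root k).card by omega,
      ← Nat.choose_symm (by omega)]
    congr 1
    omega
  simp only [hcard]
  rw [sum_card_root fun j => (t + 12 - j).choose 12]
  simp only [smul_eq_mul, tsub_zero, Nat.reduceSubDiff]

/-- The Hilbert function in degrees at least `4`. -/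
theorem finrank_homogeneousSubmodule_eq {t : ℕ} (ht : 4 ≤ t) :
    Module.finrank ℚ (homogeneousSubmodule (Fin 21) ℚ t) =
      Module.finrank ℚ ↥(homogeneousSubmodule (Fin 21) ℚ t ⊓
        idealOmegaP20.restrictScalars ℚ) +
      ((t + 12).choose 12 + 8 * (t + 11).choose 12 + 15 * (t + 10).choose 12 +
        8 * (t + 9).choose 12 + (t + 8).choose 12) := by
  rw [← ncard_standardMonomials ht, ← span_quadric]
  exact isGroebnerBasis_quadric.finrank_homogeneousSubmodule isHomogeneous_quadric t

theorem hilbertPolynomial_eq (t : ℕ) :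
    (((t + 12).choose 12 + 8 * (t + 11).choose 12 + 15 * (t + 10).choose 12 +
      8 * (t + 9).choose 12 + (t + 8).choose 12 : ℕ) : ℤ) =
      ((t + 8).choose 8 : ℤ) - 12 * ((t + 9).choose 9 : ℤ) +
        45 * ((t + 10).choose 10 : ℤ) - 66 * ((t + 11).choose 11 : ℤ) +
        33 * ((t + 12).choose 12 : ℤ) := by
  rw [show t + 12 = t + 8 + 1 + 1 + 1 + 1 from rfl, show t + 11 = t + 8 + 1 + 1 + 1 from rfl,
    show t + 10 = t + 8 + 1 + 1 from rfl, show t + 9 = t + 8 + 1 from rfl]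
  generalize t + 8 = n
  simp only [Nat.choose_succ_succ']
  push_cast
  ring

theorem algebraicIndependent_facet (k : Fin 33) :
    AlgebraicIndependent ℚ fun v : facet k => Ideal.Quotient.mk idealOmegaP20 (X v.1) := by
  rw [algebraicIndependent_iff]
  intro p hp
  have hmem : rename Subtype.val p ∈ Ideal.span (Set.range (quadric y)) := by
    rw [span_quadric, ← Ideal.Quotient.eq_zero_iff_mem, ← hp]
    rw [← Ideal.Quotient.mkₐ_eq_mk ℚ, rename_eq_aeval, ← AlgHom.comp_apply, comp_aeval]
    rfl
  have hstd : rename Subtype.val p ∈ restrictSupport ℚ (standardMonomials leadExponent) := by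
    rw [mem_restrictSupport_iff]
    intro m hm i hi
    rw [leadExponent_le_iff] at hi
    have hsub : m.support ⊆ facet k := fun v hv => by
      classical
      rw [Finset.mem_coe, support_rename_of_injective Subtype.val_injective, Finset.mem_image] at hm
      obtain ⟨m', -, rfl⟩ := hm
      obtain ⟨v', -, rfl⟩ := Finset.mem_image.mp (Finsupp.mapDomain_support hv)
      exact v'.2
    exact leadPair_notMem_facet k i (hsub hi.1) (hsub hi.2)
  have := isGroebnerBasis_quadric.eq_zero_of_mem_span hmem hstd
  exact (map_eq_zero_iff _ (rename_injective _ Subtype.val_injective)).mp this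

/-- Variables which are algebraically independent modulo an ideal bound its Hilbert function from
below. -/
theorem choose_add_finrank_le {σ K : Type*} [Finite σ] [Field K] {I : Ideal (MvPolynomial σ K)}
    {n : ℕ} {u : Fin (n + 1) → σ}
    (hu : AlgebraicIndependent K fun i => Ideal.Quotient.mk I (X (u i))) (t : ℕ) :
    (t + n).choose n +
      Module.finrank K ↥(homogeneousSubmodule σ K t ⊓ I.restrictScalars K) ≤
    Module.finrank K (homogeneousSubmodule σ K t) := by
  have hker : ∀ p : MvPolynomial (Fin (n + 1)) K, rename u p ∈ I → p = 0 := fun p hp => by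
    refine hu.eq_zero_of_aeval_eq_zero p ?_
    rw [← Ideal.Quotient.eq_zero_iff_mem, ← Ideal.Quotient.mkₐ_eq_mk K, rename_eq_aeval,
      ← AlgHom.comp_apply, comp_aeval] at hp
    exact hp
  let φ := (rename u : MvPolynomial (Fin (n + 1)) K →ₐ[K] MvPolynomial σ K).toLinearMap
  have hφ : Function.Injective φ :=
    (injective_iff_map_eq_zero φ).mpr fun p hp => hker p (hp ▸ I.zero_mem : φ p ∈ I)
  have hdim : Module.finrank K (homogeneousSubmodule (Fin (n + 1)) K t) = (t + n).choose n := by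
    rw [← ncard_degree_eq, homogeneousSubmodule_eq_finsupp_supported]
    exact Module.finrank_eq_nat_card_basis (basisRestrictSupport K _)
  have := finite_homogeneousSubmodule σ K t
  have := finite_homogeneousSubmodule (Fin (n + 1)) K t
  have hmap : (homogeneousSubmodule (Fin (n + 1)) K t).map φ ≤ homogeneousSubmodule σ K t := by
    rintro _ ⟨p, hp, rfl⟩
    exact IsHomogeneous.rename_isHomogeneous hp
  have hinf : (homogeneousSubmodule (Fin (n + 1)) K t).map φ ⊓
      (homogeneousSubmodule σ K t ⊓ I.restrictScalars K) = ⊥ := by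
    refine (Submodule.eq_bot_iff _).mpr ?_
    rintro _ ⟨⟨p, -, rfl⟩, -, hp⟩
    rw [hker p hp, map_zero]
  have : Module.Finite K ↥(homogeneousSubmodule σ K t ⊓ I.restrictScalars K) :=
    Submodule.finiteDimensional_of_le inf_le_left
  have hsum := Submodule.finrank_sup_add_finrank_inf_eq
    ((homogeneousSubmodule (Fin (n + 1)) K t).map φ)
    (homogeneousSubmodule σ K t ⊓ I.restrictScalars K)
  rw [hinf, finrank_bot, add_zero,
    ← (Submodule.equivMapOfInjective φ hφ _).finrank_eq, hdim] at hsum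
  rw [← hsum]
  exact Submodule.finrank_mono (sup_le hmap inf_le_left)

theorem ringKrullDim_quotient_idealOmegaP20 :
    ringKrullDim (MvPolynomial (Fin 21) ℚ ⧸ idealOmegaP20) = (13 : ℕ) := by
  have hlow := (algebraicIndependent_facet 0).natCard_le_ringKrullDim
  rw [Nat.card_eq_fintype_card, Fintype.card_coe, card_facet] at hlow
  have : Nontrivial (MvPolynomial (Fin 21) ℚ ⧸ idealOmegaP20) :=
    (algebraicIndependent_facet 0).algebraMap_injective.nontrivial
  have hgen : Algebra.adjoin ℚ (Set.range fun v : Fin 21 =>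
      Ideal.Quotient.mk idealOmegaP20 (X v)) = ⊤ := by
    have := congrArg (Subalgebra.map (Ideal.Quotient.mkₐ ℚ idealOmegaP20))
      (adjoin_range_X (σ := Fin 21) (R := ℚ))
    rwa [AlgHom.map_adjoin, Algebra.map_top, ← Set.range_comp,
      (AlgHom.range_eq_top _).mpr (Ideal.Quotient.mkₐ_surjective ℚ _)] at this
  obtain ⟨s, u, hs, hu⟩ := exists_algebraicIndependent_of_adjoin_eq_top hgen
  rw [hs] at hlow ⊢
  have h13 : 13 ≤ s := by exact_mod_cast hlow
  suffices s < 14 by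
    obtain rfl : s = 13 := by omega
    rfl
  by_contra! h14
  obtain ⟨t, ht⟩ : ∃ t, t = 430 := ⟨430, rfl⟩
  have hle := choose_add_finrank_le (n := 13)
    (hu.comp (Fin.castLE h14) (Fin.castLE_injective h14)) t
  rw [finrank_homogeneousSubmodule_eq (by omega)] at hle
  have h11 := Nat.choose_le_choose 12 (show t + 11 ≤ t + 12 by omega)
  have h10 := Nat.choose_le_choose 12 (show t + 10 ≤ t + 12 by omega)
  have h9 := Nat.choose_le_choose 12 (show t + 9 ≤ t + 12 by omega)
  have h8 := Nat.choose_le_choose 12 (show t + 8 ≤ t + 12 by omega)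
  have hpos : 0 < (t + 12).choose 12 := Nat.choose_pos (by omega)
  have hmul : (t + 12 + 1) * (t + 12).choose 12 = (t + 13).choose 13 * (12 + 1) :=
    Nat.add_one_mul_choose_eq (t + 12) 12
  have h443 : (t + 12 + 1) * (t + 12).choose 12 = 443 * (t + 12).choose 12 := by
    congr 1
    omega
  omega

/-- The base locus of the Cremona transformation of `ℙ²⁰` defined by the 21 quadrics
of equation (3) has dimension `12` (its affine cone has Krull dimension `13`) and
degree `33`, with Hilbert polynomial
`P(t) = C(t+8,8) − 12·C(t+9,9) + 45·C(t+10,10) − 66·C(t+11,11) + 33·C(t+12,12)`. -/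
theorem base_locus_cremonaP20 :
    ringKrullDim (MvPolynomial (Fin 21) ℚ ⧸ idealOmegaP20Sat) = (13 : ℕ) ∧
    ∃ N : ℕ, ∀ t ≥ N,
      ((Module.finrank ℚ ↥(homogeneousSubmodule (Fin 21) ℚ t) : ℤ) -
        (Module.finrank ℚ ↥(homogeneousSubmodule (Fin 21) ℚ t ⊓
          Submodule.restrictScalars ℚ idealOmegaP20Sat) : ℤ)) =
      ((t + 8).choose 8 : ℤ) - 12 * ((t + 9).choose 9 : ℤ) +
        45 * ((t + 10).choose 10 : ℤ) - 66 * ((t + 11).choose 11 : ℤ) +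
        33 * ((t + 12).choose 12 : ℤ) := by
  rw [idealOmegaP20Sat_eq]
  refine ⟨ringKrullDim_quotient_idealOmegaP20, 4, fun t ht => ?_⟩
  rw [← hilbertPolynomial_eq, finrank_homogeneousSubmodule_eq ht, Nat.cast_add,
    add_sub_cancel_left]

end
end
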